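/- Let ℓ be a prime and X ⊴ Y ⊴ Ŷ finite groups with X ⊴ Ŷ, such that Y/X has a normal Sylow ℓ-subgroup and Ŷ/Y is a (possibly trivial) ℓ-group. Let ψ ∈ Irr_{ℓ'}(X) be a character that extends to its stabilizer Y_ψ. Suppose further that at least one of the following holds: (i) ℓ does not divide o(ψ), the order of the determinantal character of ψ; or (ii) there exists K̂ ≤ Ŷ with Ŷ = X K̂ and K̂ ∩ X an ℓ'-group. Then there exists an extension χ ∈ Irr(Y_ψ) of ψ such that for every y ∈ Ŷ and σ ∈ ℋ₀ with (ψ^y)^σ = ψ one has (χ^y)^σ = χ (note that such y normalize Y_ψ, so χ^y is defined); that is, the stabilizers (Ŷ × ℋ₀)_χ and (Ŷ × ℋ₀)_ψ coincide. -/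

import Mathlib

open scoped Pointwise

noncomputable section

/-- The field `ℚ^ab`, the maximal abelian extension of `ℚ`, realized inside `ℂ`
as the subfield generated by all roots of unity. -/
def Qab : IntermediateField ℚ ℂ :=
  IntermediateField.adjoin ℚ {x : ℂ | ∃ n : ℕ, 0 < n ∧ x ^ n = 1}

/-- `χ : G → ℚ^ab` is an irreducible character of `G`, i.e. the character of a
simple (finite-dimensional) representation of `G` over `ℚ^ab`; by Brauer's theorem
`ℚ^ab` is a splitting field for every finite group, so this set is `Irr(G)`. -/
def IsIrrChar (G : Type) [Group G] (χ : G → ↥Qab) : Prop :=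
  ∃ V : FDRep (↥Qab) G, CategoryTheory.Simple V ∧ FDRep.character V = χ

/-- `χ ∈ Irr_{ℓ'}(G)`: an irreducible character whose degree `χ(1)` is coprime to `ℓ`. -/
def IsIrrCharL' (ℓ : ℕ) (G : Type) [Group G] (χ : G → ↥Qab) : Prop :=
  ∃ V : FDRep (↥Qab) G, CategoryTheory.Simple V ∧ FDRep.character V = χ ∧
    Nat.Coprime (Module.finrank (↥Qab) V) ℓ

/-- Membership in `ℋ₀ ≤ Gal(ℚ^ab/ℚ)`: `σ` has `ℓ`-power order and fixes every
root of unity of order coprime to `ℓ`. -/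
def MemH0 (ℓ : ℕ) (σ : ↥Qab ≃ₐ[ℚ] ↥Qab) : Prop :=
  (∃ k : ℕ, orderOf σ = ℓ ^ k) ∧
    ∀ (ζ : ↥Qab) (n : ℕ), 0 < n → Nat.Coprime n ℓ → ζ ^ n = 1 → σ ζ = ζ

/-- The conjugate `ψ^y` of a character `ψ` of a normal subgroup `X ⊴ Γ` by `y : Γ`,
given by `ψ^y(x) = ψ(y x y⁻¹)`. -/
def conjChar {Γ : Type} [Group Γ] {X : Subgroup Γ} (hX : X.Normal) (y : Γ)
    (ψ : ↥X → ↥Qab) : ↥X → ↥Qab :=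
  fun x => ψ ⟨y * (x : Γ) * y⁻¹, hX.conj_mem _ x.2 y⟩

lemma conjChar_one {Γ : Type} [Group Γ] {X : Subgroup Γ} (hX : X.Normal)
    (ψ : ↥X → ↥Qab) : conjChar hX 1 ψ = ψ := by
  funext x
  simp only [conjChar]
  exact congrArg ψ (Subtype.ext (by group))

lemma conjChar_mul {Γ : Type} [Group Γ] {X : Subgroup Γ} (hX : X.Normal)
    (a b : Γ) (ψ : ↥X → ↥Qab) :
    conjChar hX (a * b) ψ = conjChar hX b (conjChar hX a ψ) := by
  funext x
  simp only [conjChar]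
  exact congrArg ψ (Subtype.ext (by group))

/-- The stabilizer `Γ_ψ ≤ Γ` of a character `ψ` of a normal subgroup `X ⊴ Γ`
under the conjugation action. -/
def charStab {Γ : Type} [Group Γ] {X : Subgroup Γ} (hX : X.Normal)
    (ψ : ↥X → ↥Qab) : Subgroup Γ where
  carrier := {y | conjChar hX y ψ = ψ}
  one_mem' := conjChar_one hX ψ
  mul_mem' := by
    intro a b ha hb
    show conjChar hX (a * b) ψ = ψ
    rw [conjChar_mul, ha, hb]
  inv_mem' := by
    intro a ha
    show conjChar hX a⁻¹ ψ = ψ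
    have h := conjChar_mul hX a a⁻¹ ψ
    rw [mul_inv_cancel, conjChar_one, ha] at h
    exact h.symm

/-!
Fix a subgroup `J` (`⊤` in case (i), `Khat` in case (ii)) with `Yhat = X J`, and let `T` be the
stabilizer `Y_ψ`. By Gallagher's theorem the extensions of `ψ` to `T` form a torsor under the
linear characters of `T ⧸ X`. Since `ψ(1)` is prime to `ℓ`, this torsor contains an extension
whose determinantal character has order prime to `ℓ` on `J ⊓ T`, and the extensions with this
property form a torsor under the linear characters of `T ⧸ X` of order prime to `ℓ`; in particular
their number is prime to `ℓ`. The pairs `(y, σ)` which stabilize `ψ` permute these extensions, and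
they do so through an `ℓ`-group because inner automorphisms of `T` act trivially, so they have a
common fixed point `χ`.

Gallagher's theorem needs `ℚ^ab` to be a splitting field (Brauer). Let `q` be the degree of the
endomorphism algebra of an irreducible representation of a group `G`, and suppose that a prime `p`
divides `q`. A large power of a suitable `G`-set with abelian-by-`p` point stabilizers has a
number of fixed points congruent to `1` modulo a large power of `p` for each `g ∈ G`.
Abelian-by-`p` groups split by Clifford theory, so `q ^ 2` divides the dimension of the
endomorphism algebra over each such stabilizer; summing over the `G`-set gives `|G| q ^ 2 ∣ |G| q`
modulo that power, a contradiction.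
-/

/-! ### Abelian-by-`p` groups -/

/-- `G` has an abelian normal subgroup `C` such that `G ⧸ C` is a `p`-group. This weakening of
"`p`-hyperelementary", where `C` would be cyclic of order prime to `p`, passes to subgroups. -/
def IsAbelianByPGroup (p : ℕ) (G : Type*) [Group G] : Prop :=
  ∃ C : Subgroup G, C.Normal ∧ IsMulCommutative C ∧ ∀ g : G, ∃ k : ℕ, g ^ p ^ k ∈ C

namespace IsAbelianByPGroup

variable {p : ℕ} {G H : Type*} [Group G] [Group H]

lemma of_injective (hG : IsAbelianByPGroup p G) (f : H →* G) (hf : Function.Injective f) :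
    IsAbelianByPGroup p H := by
  obtain ⟨C, hC, hcomm, hpow⟩ := hG
  refine ⟨C.comap f, inferInstance, ⟨⟨fun a b => Subtype.ext (hf ?_)⟩⟩, fun g => ?_⟩
  · simpa using congrArg Subtype.val (hcomm.is_comm.comm (⟨f a, a.2⟩ : C) ⟨f b, b.2⟩)
  · simpa only [Subgroup.mem_comap, map_pow] using hpow (f g)

lemma of_surjective (hG : IsAbelianByPGroup p G) (f : G →* H) (hf : Function.Surjective f) :
    IsAbelianByPGroup p H := by
  obtain ⟨C, hC, hcomm, hpow⟩ := hG
  refine ⟨C.map f, hC.map f hf, inferInstance, hf.forall.2 fun g => ?_⟩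
  obtain ⟨k, hk⟩ := hpow g
  exact ⟨k, map_pow f g _ ▸ Subgroup.mem_map_of_mem f hk⟩

end IsAbelianByPGroup

section NoncentralAbelianSubgroup

variable {G : Type*} [Group G]

lemma isMulCommutative_comap_zpowers_mk (a : G) :
    IsMulCommutative
      ((Subgroup.zpowers (a : G ⧸ Subgroup.center G)).comap
        (QuotientGroup.mk' (Subgroup.center G))) := by
  set Q := Subgroup.zpowers (a : G ⧸ Subgroup.center G)
  refine MonoidHom.isMulCommutative_of_isCyclic_of_ker_le_center
    ((QuotientGroup.mk' (Subgroup.center G)).subgroupComap Q) fun x hx => ?_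
  have hx' : (x : G) ∈ Subgroup.center G :=
    (QuotientGroup.eq_one_iff _).1 (congrArg Subtype.val (MonoidHom.mem_ker.1 hx))
  exact Subgroup.mem_center_iff.2 fun y => Subtype.ext (Subgroup.mem_center_iff.1 hx' y)

lemma IsAbelianByPGroup.exists_normal_not_le_center {p : ℕ} [Fact p.Prime] [Finite G]
    (hG : IsAbelianByPGroup p G) (hcenter : Subgroup.center G ≠ ⊤) :
    ∃ A : Subgroup G, A.Normal ∧ IsMulCommutative A ∧ ¬ A ≤ Subgroup.center G := by
  obtain ⟨C, hC, hcomm, hpow⟩ := hG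
  by_cases hCZ : C ≤ Subgroup.center G
  swap
  · exact ⟨C, hC, hcomm, hCZ⟩
  have hpgroup : IsPGroup p (G ⧸ Subgroup.center G) :=
    (QuotientGroup.mk_surjective).forall.2 fun g => (hpow g).imp fun k hk =>
      (QuotientGroup.eq_one_iff _).2 (hCZ hk)
  have : Nontrivial (G ⧸ Subgroup.center G) := QuotientGroup.nontrivial_iff.2 hcenter
  have : Nontrivial (Subgroup.center (G ⧸ Subgroup.center G)) := hpgroup.center_nontrivial
  obtain ⟨z, hz, hz1⟩ := (Subgroup.nontrivial_iff_exists_ne_one _).1 this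
  obtain ⟨a, rfl⟩ := QuotientGroup.mk_surjective z
  have : (Subgroup.zpowers (a : G ⧸ Subgroup.center G)).Normal :=
    ⟨fun x hx g => by
      rwa [Subgroup.mem_center_iff.1 (Subgroup.zpowers_le.2 hz hx) g, mul_inv_cancel_right]⟩
  refine ⟨_, this.comap _, isMulCommutative_comap_zpowers_mk a, fun hle => hz1 ?_⟩
  exact (QuotientGroup.eq_one_iff a).2 (hle (Subgroup.mem_zpowers _))

end NoncentralAbelianSubgroup

section Eigenvectors

variable {K V : Type*} [Field K] [AddCommGroup V] [Module K V]

lemma exists_hasEigenvalue_of_pow_eq_one [FiniteDimensional K V] [Nontrivial V] {n : ℕ} [NeZero n]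
    [HasEnoughRootsOfUnity K n] {f : Module.End K V} (hf : f ^ n = 1) :
    ∃ c : K, f.HasEigenvalue c := by
  obtain ⟨ζ, hζ⟩ := HasEnoughRootsOfUnity.exists_primitiveRoot K n
  have hdvd : minpoly K f ∣ Polynomial.X ^ n - Polynomial.C 1 := minpoly.dvd K f (by simp [hf])
  have hsplits : (minpoly K f).Splits := (Polynomial.X_pow_sub_one_splits hζ).of_dvd
    (Polynomial.X_pow_sub_C_ne_zero (NeZero.pos n) 1) hdvd
  obtain ⟨c, hc⟩ := hsplits.exists_eval_eq_zero
    (minpoly.degree_pos (Algebra.IsIntegral.isIntegral f)).ne'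
  exact ⟨c, Module.End.hasEigenvalue_of_isRoot hc⟩

end Eigenvectors

section Weights

variable {K G V : Type*} [Field K] [Group G] [AddCommGroup V] [Module K V]

/-- The common eigenspace of all `ρ g` with eigenvalues `χ g`. -/
def weightSpace (ρ : Representation K G V) (χ : G → K) : Submodule K V :=
  ⨅ g, Module.End.eigenspace (ρ g) (χ g)

lemma mem_weightSpace {ρ : Representation K G V} {χ : G → K} {v : V} :
    v ∈ weightSpace ρ χ ↔ ∀ g, ρ g v = χ g • v := by
  simp only [weightSpace, Submodule.mem_iInf, Module.End.mem_eigenspace_iff]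

lemma iSupIndep_weightSpace {ρ : Representation K G V} (hρ : ∀ a b, Commute (ρ a) (ρ b)) :
    iSupIndep (weightSpace ρ) :=
  (Module.End.independent_iInf_maxGenEigenspace_of_forall_mapsTo ρ fun a b c =>
    Module.End.mapsTo_maxGenEigenspace_of_comm (hρ b a) c).mono fun _ =>
      iInf_mono fun _ => (Module.End.genEigenspace _ _).mono le_top

lemma exists_isAtom_subrepresentation [FiniteDimensional K V] [Nontrivial V]
    (ρ : Representation K G V) : ∃ W : Subrepresentation ρ, IsAtom W := by
  have : WellFoundedLT (Subrepresentation ρ) :=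
    (StrictMono.wellFoundedLT (f := Subrepresentation.toSubmodule) fun _ _ h => h)
  have : Nontrivial (Subrepresentation ρ) :=
    ⟨⊥, ⊤, fun h => bot_ne_top (congrArg Subrepresentation.toSubmodule h)⟩
  obtain h | ⟨W, hW, -⟩ := eq_bot_or_exists_atom_le (⊤ : Subrepresentation ρ)
  · exact absurd h top_ne_bot
  · exact ⟨W, hW⟩

lemma exists_weightSpace_ne_bot [Finite G] [FiniteDimensional K V] [Nontrivial V]
    [HasEnoughRootsOfUnity K (Monoid.exponent G)] {ρ : Representation K G V}
    (hρ : ∀ a b, Commute (ρ a) (ρ b)) : ∃ χ : G → K, weightSpace ρ χ ≠ ⊥ := by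
  have : NeZero (Monoid.exponent G) := ⟨Monoid.exponent_ne_zero_of_finite⟩
  obtain ⟨W, hW⟩ := exists_isAtom_subrepresentation ρ
  have hWbot : W.toSubmodule ≠ ⊥ := fun h => hW.1 (Subrepresentation.toSubmodule_injective h)
  have : Nontrivial W.toSubmodule := Submodule.nontrivial_iff_ne_bot.2 hWbot
  have hscalar : ∀ g, ∃ c : K, ∀ w ∈ W, ρ g w = c • w := fun g => by
    obtain ⟨c, hc⟩ := exists_hasEigenvalue_of_pow_eq_one (K := K) (n := Monoid.exponent G)
      (f := W.toRepresentation g) (by rw [← map_pow, Monoid.pow_exponent_eq_one, map_one])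
    obtain ⟨w, hw⟩ := hc.exists_hasEigenvector
    let E : Subrepresentation ρ := ⟨Module.End.eigenspace (ρ g) c, fun h v hv =>
      Module.End.mapsTo_genEigenspace_of_comm (hρ g h) c 1 hv⟩
    have hwE : (w : V) ∈ E :=
      Module.End.mem_eigenspace_iff.2 (congrArg Subtype.val hw.apply_eq_smul)
    have hWE : W ≤ E := hW.not_disjoint_iff_le.1 fun hdisj =>
      hw.2 (Subtype.ext ((Submodule.mem_bot K).1 (hdisj.le_bot ⟨w.2, hwE⟩)))
    exact ⟨c, fun v hv => Module.End.mem_eigenspace_iff.1 (hWE hv)⟩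
  choose χ hχ using hscalar
  exact ⟨χ, ne_bot_of_le_ne_bot hWbot fun w hw => mem_weightSpace.2 fun g => hχ g w hw⟩

variable {ρ : Representation K G V}

lemma eq_algebraMap_of_apply_eq_smul [ρ.IsIrreducible] (f : ρ.IntertwiningMap ρ) {c : K} {v : V}
    (hv : v ≠ 0) (hf : f v = c • v) : f = algebraMap K (ρ.IntertwiningMap ρ) c := by
  have hfc : (f - algebraMap K (ρ.IntertwiningMap ρ) c) v = 0 := by
    simp [Algebra.algebraMap_eq_smul_one, hf]
  refine sub_eq_zero.1 ((Representation.IsIrreducible.injective_or_eq_zero _).resolve_left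
    fun hinj => hv (hinj (hfc.trans (map_zero _).symm)))

lemma iSup_map_eq_top [ρ.IsIrreducible] {U : Submodule K V} (hU : U ≠ ⊥) :
    ⨆ g, U.map (ρ g) = ⊤ := by
  let S : Subrepresentation ρ := ⟨⨆ g, U.map (ρ g), fun h v hv => by
    have hle : (⨆ g, U.map (ρ g)).map (ρ h) ≤ ⨆ g, U.map (ρ g) := by
      rw [Submodule.map_iSup]
      refine iSup_le fun g => (le_iSup (fun g => U.map (ρ g)) (h * g)).trans' ?_
      rw [map_mul, Module.End.mul_eq_comp, Submodule.map_comp]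
    exact hle (Submodule.mem_map_of_mem hv)⟩
  have hUS : U ≤ S.toSubmodule := (le_iSup (fun g => U.map (ρ g)) 1).trans' (by
    rw [map_one, Module.End.one_eq_id, Submodule.map_id])
  have hS : S ≠ ⊥ := fun h => ne_bot_of_le_ne_bot hU hUS
    (congrArg Subrepresentation.toSubmodule h)
  exact congrArg Subrepresentation.toSubmodule ((eq_bot_or_eq_top S).resolve_left hS)

lemma eq_top_of_forall_map_le [ρ.IsIrreducible] {U : Submodule K V} (hU : U ≠ ⊥)
    (hρU : ∀ g, U.map (ρ g) ≤ U) : U = ⊤ :=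
  top_unique ((iSup_map_eq_top (ρ := ρ) hU).ge.trans (iSup_le hρU))

lemma nontrivial_of_isIrreducible (ρ : Representation K G V) [ρ.IsIrreducible] : Nontrivial V := by
  obtain ⟨U, W, hUW⟩ := exists_pair_ne (Subrepresentation ρ)
  exact (Submodule.nontrivial_iff K).1
    ⟨_, _, Subrepresentation.toSubmodule_injective.ne hUW⟩

lemma algebraMap_intertwiningMap_surjective_of_commute [Finite G] [FiniteDimensional K V]
    [HasEnoughRootsOfUnity K (Monoid.exponent G)] [ρ.IsIrreducible]
    (hρ : ∀ a b, Commute (ρ a) (ρ b)) :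
    Function.Surjective (algebraMap K (ρ.IntertwiningMap ρ)) := fun f => by
  have := nontrivial_of_isIrreducible ρ
  obtain ⟨χ, hχ⟩ := exists_weightSpace_ne_bot hρ
  obtain ⟨v, hv, hv0⟩ := Submodule.exists_mem_ne_zero_of_ne_bot hχ
  have hspan : Submodule.span K {v} = ⊤ := by
    refine eq_top_of_forall_map_le (ρ := ρ) (by rwa [ne_eq, Submodule.span_singleton_eq_bot])
      fun g => ?_
    rw [Submodule.map_span, Set.image_singleton, Submodule.span_singleton_le_iff_mem,
      mem_weightSpace.1 hv g]
    exact Submodule.smul_mem _ _ (Submodule.mem_span_singleton_self v)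
  obtain ⟨c, hc⟩ := Submodule.mem_span_singleton.1 (hspan ▸ Submodule.mem_top (x := f v))
  exact ⟨c, (eq_algebraMap_of_apply_eq_smul f hv0 hc.symm).symm⟩

variable {A : Subgroup G} [A.Normal]

/-- The stabilizer of `χ` in `G`, acting on the functions on `A` through conjugation. -/
def weightStabilizer (χ : A → K) : Subgroup G where
  carrier := {g | ∀ a, χ (MulAut.conjNormal g a) = χ a}
  one_mem' := by simp
  mul_mem' {g h} hg hh a := by rw [map_mul, MulAut.mul_apply, hg, hh]
  inv_mem' {g} hg a := by rw [← hg, ← MulAut.mul_apply, ← map_mul, mul_inv_cancel, map_one,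
    MulAut.one_apply]

lemma map_weightSpace_le (χ : A → K) (g : G) :
    (weightSpace (ρ.comp A.subtype) χ).map (ρ g) ≤
      weightSpace (ρ.comp A.subtype) fun a => χ (MulAut.conjNormal g⁻¹ a) := by
  rw [Submodule.map_le_iff_le_comap]
  refine fun v hv => mem_weightSpace.2 fun a => ?_
  have hconj : (a : G) * g = g * (MulAut.conjNormal g⁻¹ a : A) := by
    rw [MulAut.conjNormal_apply]; group
  have hva : ρ (MulAut.conjNormal g⁻¹ a : A) v = χ (MulAut.conjNormal g⁻¹ a) • v :=
    mem_weightSpace.1 hv (MulAut.conjNormal g⁻¹ a)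
  calc ρ a (ρ g v) = ρ g (ρ (MulAut.conjNormal g⁻¹ a : A) v) := by
        rw [← Module.End.mul_apply, ← map_mul, hconj, map_mul, Module.End.mul_apply]
    _ = χ (MulAut.conjNormal g⁻¹ a) • ρ g v := by rw [hva, map_smul]

lemma map_weightSpace_le_of_mem {χ : A → K} {g : G} (hg : g ∈ weightStabilizer χ) :
    (weightSpace (ρ.comp A.subtype) χ).map (ρ g) ≤ weightSpace (ρ.comp A.subtype) χ := by
  refine (map_weightSpace_le χ g).trans_eq (congrArg _ (funext fun a => ?_))
  exact (weightStabilizer χ).inv_mem hg a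

/-- A weight space of a normal subgroup, as a representation of the stabilizer of the weight. -/
def weightSubrepresentation (ρ : Representation K G V) (χ : A → K) :
    Subrepresentation (ρ.comp (weightStabilizer χ).subtype) where
  toSubmodule := weightSpace (ρ.comp A.subtype) χ
  apply_mem_toSubmodule g _ hv := map_weightSpace_le_of_mem g.2 (Submodule.mem_map_of_mem hv)

/- The translates of `U` by the stabilizer of `χ` lie in `U`, the others in the sum of the other
weight spaces, which meets the weight space of `χ` trivially. -/
lemma eq_weightSpace_of_le [ρ.IsIrreducible] (hA : ∀ a b : A, Commute (ρ a) (ρ b)) {χ : A → K}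
    {U : Submodule K V} (hUχ : U ≤ weightSpace (ρ.comp A.subtype) χ) (hU : U ≠ ⊥)
    (hstab : ∀ g ∈ weightStabilizer χ, U.map (ρ g) ≤ U) :
    U = weightSpace (ρ.comp A.subtype) χ := by
  let W := weightSpace (ρ.comp A.subtype)
  let D := ⨆ χ' ≠ χ, W χ'
  have htranslate : ∀ g, U.map (ρ g) ≤ U ⊔ D := fun g => by
    by_cases hg : g ∈ weightStabilizer χ
    · exact (hstab g hg).trans le_sup_left
    · have hχ' : (fun a => χ (MulAut.conjNormal g⁻¹ a)) ≠ χ := fun h =>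
        hg (inv_mem_iff.1 (congrFun h))
      exact ((Submodule.map_mono hUχ).trans (map_weightSpace_le χ g)).trans
        ((le_iSup₂ (f := fun χ' (_ : χ' ≠ χ) => W χ') _ hχ').trans le_sup_right)
  have hsup : U ⊔ D = ⊤ := top_unique ((iSup_map_eq_top hU).ge.trans (iSup_le htranslate))
  have hinf : W χ ⊓ D = ⊥ := (iSupIndep_weightSpace (ρ := ρ.comp A.subtype) hA χ).eq_bot
  calc U = U ⊔ D ⊓ W χ := by rw [inf_comm, hinf, sup_bot_eq]
    _ = (U ⊔ D) ⊓ W χ := (sup_inf_assoc_of_le D hUχ).symm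
    _ = W χ := by rw [hsup, top_inf_eq]

lemma isIrreducible_weightSubrepresentation [ρ.IsIrreducible]
    (hA : ∀ a b : A, Commute (ρ a) (ρ b)) {χ : A → K}
    (hχ : weightSpace (ρ.comp A.subtype) χ ≠ ⊥) :
    (weightSubrepresentation ρ χ).toRepresentation.IsIrreducible where
  exists_pair_ne := ⟨⊥, ⊤, fun h => hχ (by
    have : Subsingleton (weightSpace (ρ.comp A.subtype) χ) :=
      (Submodule.subsingleton_iff K).1
        (subsingleton_of_bot_eq_top (α := Submodule K (weightSpace (ρ.comp A.subtype) χ))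
          (congrArg Subrepresentation.toSubmodule h))
    exact Submodule.eq_bot_of_subsingleton)⟩
  eq_bot_or_eq_top U := by
    let W := weightSpace (ρ.comp A.subtype) χ
    have hmap : Function.Injective (Submodule.map W.subtype) :=
      Submodule.map_injective_of_injective W.injective_subtype
    refine or_iff_not_imp_left.2 fun hU => Subrepresentation.toSubmodule_injective (hmap ?_)
    refine (eq_weightSpace_of_le hA (Submodule.map_subtype_le W _) (fun h => hU ?_) ?_).trans
      (Submodule.map_subtype_top W).symm
    · exact Subrepresentation.toSubmodule_injective (hmap (h.trans (Submodule.map_bot _).symm))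
    · rintro g hg _ ⟨_, ⟨u, hu, rfl⟩, rfl⟩
      exact ⟨_, U.apply_mem_toSubmodule ⟨g, hg⟩ hu, rfl⟩

lemma weightStabilizer_ne_top [ρ.IsIrreducible] {χ : A → K}
    (hχ : weightSpace (ρ.comp A.subtype) χ ≠ ⊥) {a g : G} (ha : a ∈ A)
    (hag : ¬ Commute (ρ a) (ρ g)) : weightStabilizer χ ≠ ⊤ := fun hJ => hag (by
  have hW : weightSpace (ρ.comp A.subtype) χ = ⊤ := eq_top_of_forall_map_le hχ fun h =>
    map_weightSpace_le_of_mem (hJ ▸ Subgroup.mem_top h)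
  have hρa : ρ a = algebraMap K (Module.End K V) (χ ⟨a, ha⟩) := LinearMap.ext fun v =>
    mem_weightSpace.1 (hW ▸ Submodule.mem_top : v ∈ weightSpace (ρ.comp A.subtype) χ) ⟨a, ha⟩
  rw [hρa]
  exact Algebra.commutes (χ ⟨a, ha⟩) (ρ g))

/-- The restriction of an intertwining map to a weight space. -/
def weightSpaceRestrict (f : ρ.IntertwiningMap ρ) (χ : A → K) :
    (weightSubrepresentation ρ χ).toRepresentation.IntertwiningMap
      (weightSubrepresentation ρ χ).toRepresentation where
  toLinearMap := f.toLinearMap.restrict (p := weightSpace (ρ.comp A.subtype) χ)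
    (q := weightSpace (ρ.comp A.subtype) χ) fun v hv => mem_weightSpace.2 fun a => by
      change ρ a (f v) = χ a • f v
      rw [← f.isIntertwining, ← map_smul]
      exact congrArg f (mem_weightSpace.1 hv a)
  isIntertwining' g := LinearMap.ext fun v =>
    Subtype.ext (Representation.IntertwiningMap.isIntertwining ρ ρ f (g : G) (v : V))

end Weights

lemma IsAbelianByPGroup.exists_normal_commute {p : ℕ} [Fact p.Prime] {G M : Type*} [Group G]
    [Finite G] [Monoid M] (hG : IsAbelianByPGroup p G) (f : G →* M)
    (hf : ∃ a b, ¬ Commute (f a) (f b)) :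
    ∃ A : Subgroup G, A.Normal ∧ (∀ a b : A, Commute (f a) (f b)) ∧
      ∃ a ∈ A, ∃ g, ¬ Commute (f a) (f g) := by
  let q := f.toHomUnits.rangeRestrict
  have hq : Function.Surjective q := f.toHomUnits.rangeRestrict_surjective
  have := Finite.of_surjective q hq
  have hcomm : ∀ a b, Commute (q a) (q b) ↔ Commute (f a) (f b) := fun a b => by
    simp only [commute_iff_eq, q, Subtype.ext_iff, Units.ext_iff]
    rfl
  have hcenter : Subgroup.center f.toHomUnits.range ≠ ⊤ := fun h => by
    obtain ⟨a, b, hab⟩ := hf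
    exact hab ((hcomm a b).1 (Subgroup.mem_center_iff.1 (h ▸ Subgroup.mem_top (q b)) (q a)))
  obtain ⟨A, hA, hAcomm, hAcenter⟩ :=
    (hG.of_surjective q hq).exists_normal_not_le_center hcenter
  refine ⟨A.comap q, hA.comap q, fun a b => (hcomm a b).1 (congrArg Subtype.val
    (hAcomm.is_comm.comm (⟨q a, a.2⟩ : A) ⟨q b, b.2⟩)), ?_⟩
  obtain ⟨x, hxA, hx⟩ := SetLike.not_le_iff_exists.1 hAcenter
  obtain ⟨a, rfl⟩ := hq x
  obtain ⟨y, hy⟩ := not_forall.1 (fun h => hx (Subgroup.mem_center_iff.2 h))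
  obtain ⟨g, rfl⟩ := hq y
  exact ⟨a, hxA, g, fun h => hy ((hcomm a g).2 h).symm⟩

theorem IsAbelianByPGroup.algebraMap_intertwiningMap_surjective {p : ℕ} [Fact p.Prime]
    {K G V : Type*} [Field K] [Group G] [Finite G] [AddCommGroup V] [Module K V]
    [FiniteDimensional K V] [HasEnoughRootsOfUnity K (Monoid.exponent G)]
    (hG : IsAbelianByPGroup p G) (ρ : Representation K G V) [ρ.IsIrreducible] :
    Function.Surjective (algebraMap K (ρ.IntertwiningMap ρ)) := by
  induction hn : Nat.card G using Nat.strong_induction_on generalizing G V with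
  | _ n ih =>
  by_cases hcomm : ∀ a b, Commute (ρ a) (ρ b)
  · exact algebraMap_intertwiningMap_surjective_of_commute hcomm
  push Not at hcomm
  obtain ⟨A, _, hA, a, haA, g, hag⟩ := hG.exists_normal_commute ρ hcomm
  have : NeZero (Monoid.exponent G) := ⟨Monoid.exponent_ne_zero_of_finite⟩
  have hroots : ∀ H : Subgroup G, HasEnoughRootsOfUnity K (Monoid.exponent H) := fun H =>
    HasEnoughRootsOfUnity.of_dvd K (Monoid.exponent_submonoid_dvd H.toSubmonoid)
  have := nontrivial_of_isIrreducible ρ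
  have := hroots A
  obtain ⟨χ, hχ⟩ := exists_weightSpace_ne_bot (ρ := ρ.comp A.subtype) hA
  let J := weightStabilizer χ
  have := hroots J
  have := isIrreducible_weightSubrepresentation hA hχ
  have hJ : Nat.card J < n := hn ▸ J.card_le_card_group.lt_of_ne fun h =>
    weightStabilizer_ne_top hχ haA hag (J.eq_top_of_card_eq h)
  intro f
  obtain ⟨c, hc⟩ := ih _ hJ (hG.of_injective J.subtype J.subtype_injective)
    (weightSubrepresentation ρ χ).toRepresentation rfl (weightSpaceRestrict f χ)
  obtain ⟨v, hv, hv0⟩ := Submodule.exists_mem_ne_zero_of_ne_bot hχ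
  refine ⟨c, (eq_algebraMap_of_apply_eq_smul f hv0 ?_).symm⟩
  rw [Algebra.algebraMap_eq_smul_one] at hc
  exact (congrArg Subtype.val (DFunLike.congr_fun hc ⟨v, hv⟩)).symm

/-! ### Fixed points modulo a power of `p` -/

section FixedPoints

variable {G : Type*} [Group G]

lemma card_fixedBy_modEq_card_fixedBy_pow {p : ℕ} [Fact p.Prime] {S : Type*} [Finite S]
    [MulAction G S] (g : G) (a : ℕ) :
    Nat.card (MulAction.fixedBy S g) ≡ Nat.card (MulAction.fixedBy S (g ^ p ^ a)) [MOD p] := by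
  classical
  set F := MulAction.fixedBy S (g ^ p ^ a)
  have := Fintype.ofFinite S
  have hmem : ∀ s ∈ F, g • s ∈ F := fun s hs => by
    rw [MulAction.mem_fixedBy, smul_smul, (Commute.pow_self g _).eq, mul_smul,
      MulAction.mem_fixedBy.1 hs]
  let f : Function.End F := fun s => ⟨g • s, hmem s s.2⟩
  have hf_pow : ∀ (n : ℕ) (s : F), ((f ^ n) s : S) = g ^ n • (s : S) := fun n => by
    induction n with
    | zero => intro s; rw [pow_zero, pow_zero, one_smul]; rfl
    | succ n ih => intro s; rw [pow_succ', pow_succ', mul_smul, ← ih]; rfl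
  have hf : f ^ p ^ a = 1 := funext fun s => Subtype.ext ((hf_pow _ s).trans s.2)
  have hfixed : Function.fixedPoints f ≃ MulAction.fixedBy S g :=
    { toFun := fun s => ⟨s, congrArg Subtype.val s.2⟩
      invFun := fun s => ⟨⟨s, pow_mem (MulAction.mem_stabilizer_iff.2 s.2) _⟩, Subtype.ext s.2⟩ }
  rw [← Nat.card_congr hfixed, Nat.card_eq_fintype_card, Nat.card_eq_fintype_card]
  exact (Equiv.Perm.card_fixedPoints_modEq hf).symm

variable [Finite G]

lemma exists_le_normalizer_pow_mem_not_dvd_relIndex (p : ℕ) [Fact p.Prime] (C : Subgroup G) :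
    ∃ H : Subgroup G, C ≤ H ∧ H ≤ Subgroup.normalizer C ∧ (∀ h ∈ H, ∃ k : ℕ, h ^ p ^ k ∈ C) ∧
      ¬ p ∣ H.relIndex (Subgroup.normalizer C) := by
  let N := Subgroup.normalizer (C : Set G)
  let π := QuotientGroup.mk' (C.subgroupOf N)
  obtain ⟨Q⟩ : Nonempty (Sylow p (N ⧸ C.subgroupOf N)) := inferInstance
  refine ⟨((Q : Subgroup _).comap π).map N.subtype, fun c hc => ?_, ?_, ?_, ?_⟩
  · have hcN : c ∈ N := Subgroup.le_normalizer hc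
    exact ⟨⟨c, hcN⟩, QuotientGroup.le_comap_mk' _ _ (Subgroup.mem_subgroupOf.2 hc), rfl⟩
  · exact Subgroup.map_subtype_le _
  · rintro _ ⟨x, hx, rfl⟩
    obtain ⟨k, hk⟩ := Q.isPGroup' ⟨π x, hx⟩
    have hπ : π (x ^ p ^ k) = 1 := (map_pow π x _).trans (congrArg Subtype.val hk)
    exact ⟨k, Subgroup.mem_subgroupOf.1 ((QuotientGroup.eq_one_iff _).1 hπ)⟩
  · rw [Subgroup.relIndex, Subgroup.subgroupOf,
      Subgroup.comap_map_eq_self_of_injective N.subtype_injective,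
      Subgroup.index_comap_of_surjective _ (QuotientGroup.mk'_surjective _)]
    exact Q.not_dvd_index

variable {H : Subgroup G}

lemma mk_mem_fixedBy_iff_mem_normalizer {p : ℕ} {c : G} (hc : (orderOf c).Coprime p)
    (hcH : Subgroup.zpowers c ≤ H) (hpow : ∀ h ∈ H, ∃ k : ℕ, h ^ p ^ k ∈ Subgroup.zpowers c)
    (x : G) :
    (x : G ⧸ H) ∈ MulAction.fixedBy (G ⧸ H) c ↔ x ∈ Subgroup.normalizer (Subgroup.zpowers c) := by
  have hfixed : (x : G ⧸ H) ∈ MulAction.fixedBy (G ⧸ H) c ↔ x⁻¹ * c * x ∈ H := by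
    rw [MulAction.mem_fixedBy, eq_comm, MulAction.Quotient.smul_coe, QuotientGroup.eq, smul_eq_mul,
      mul_assoc]
  rw [hfixed, ← inv_mem_iff (x := x)]
  constructor
  · intro hx
    obtain ⟨k, hk⟩ := hpow _ hx
    have horder : orderOf (x⁻¹ * c * x) = orderOf c := by
      simpa using orderOf_injective (MulAut.conj x⁻¹).toMonoidHom (MulAut.conj x⁻¹).injective c
    obtain ⟨j, hj⟩ := exists_pow_eq_self_of_coprime (horder ▸ (hc.pow_right k).symm)
    refine Subgroup.mem_normalizer_fintype fun _ ⟨i, hi⟩ => ?_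
    have hmem : x⁻¹ * c * x⁻¹⁻¹ ∈ Subgroup.zpowers c := by
      rw [inv_inv, ← hj]
      exact pow_mem hk j
    rw [← hi, ← conj_zpow]
    exact zpow_mem hmem i
  · intro hx
    have := (Subgroup.mem_normalizer_iff.1 hx c).1 (Subgroup.mem_zpowers c)
    exact hcH (by rwa [inv_inv] at this)

lemma card_eq_relIndex_of_mk_mem_iff {N : Subgroup G} {F : Set (G ⧸ H)} (hHN : H ≤ N)
    (hF : ∀ x : G, (x : G ⧸ H) ∈ F ↔ x ∈ N) : Nat.card F = H.relIndex N := by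
  have hpre : (QuotientGroup.mk ⁻¹' F : Set G) = N := Set.ext hF
  have hcard := Nat.card_congr (QuotientGroup.preimageMkEquivSubgroupProdSet H F)
  rw [Nat.card_prod, hpre] at hcard
  refine Nat.eq_of_mul_eq_mul_left (Nat.card_pos (α := H)) (hcard.symm.trans ?_)
  rw [mul_comm, ← Nat.card_congr (Subgroup.subgroupOfEquivOfLe hHN).toEquiv]
  exact (Subgroup.index_mul_card _).symm

lemma exists_isAbelianByPGroup_not_dvd_card_fixedBy (p : ℕ) [Fact p.Prime] (g : G) :
    ∃ H : Subgroup G, IsAbelianByPGroup p H ∧ ¬ p ∣ Nat.card (MulAction.fixedBy (G ⧸ H) g) := by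
  obtain ⟨a, m, hpm, hm⟩ :=
    Nat.exists_eq_pow_mul_and_not_dvd (orderOf_pos g).ne' p (Fact.out : p.Prime).ne_one
  have hpa : p ^ a ≠ 0 := pow_ne_zero _ (Fact.out : p.Prime).ne_zero
  let c := g ^ p ^ a
  have hc : (orderOf c).Coprime p := by
    rw [orderOf_pow_of_dvd hpa (hm ▸ dvd_mul_right _ _), hm, Nat.mul_div_cancel_left _ hpa.bot_lt]
    exact ((Fact.out : p.Prime).coprime_iff_not_dvd.2 hpm).symm
  obtain ⟨H, hcH, hHN, hpow, hndvd⟩ :=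
    exists_le_normalizer_pow_mem_not_dvd_relIndex p (Subgroup.zpowers c)
  refine ⟨H, ⟨(Subgroup.zpowers c).subgroupOf H, Subgroup.normal_subgroupOf_of_le_normalizer hHN,
    inferInstance, fun h => hpow h h.2⟩, fun hdvd => hndvd ?_⟩
  rw [← card_eq_relIndex_of_mk_mem_iff hHN
    (mk_mem_fixedBy_iff_mem_normalizer hc hcH hpow)]
  exact ((card_fixedBy_modEq_card_fixedBy_pow g a).dvd_iff dvd_rfl).1 hdvd

end FixedPoints

lemma one_mem_of_forall_exists_apply_ne_zero {p : ℕ} [Fact p.Prime] {ι : Type*} [Finite ι]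
    (R : NonUnitalSubsemiring (ι → ZMod p)) (hR : ∀ i, ∃ f ∈ R, f i ≠ 0) : 1 ∈ R := by
  classical
  have := Fintype.ofFinite ι
  have hneg : ∀ f ∈ R, -f ∈ R := fun f hf => by
    have : -f = (p - 1) • f := funext fun i => by
      simp [nsmul_eq_mul, Nat.cast_sub (Fact.out : p.Prime).one_le]
    exact this ▸ nsmul_mem hf _
  have hone : ∀ i, ∃ f ∈ R, f i = 1 := fun i => by
    obtain ⟨f, hf, hfi⟩ := hR i
    have hpow : ∀ n, f ^ (n + 1) ∈ R := fun n => by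
      induction n with
      | zero => simpa using hf
      | succ n ih => exact pow_succ f (n + 1) ▸ mul_mem ih hf
    have hp : p - 2 + 1 = p - 1 := by have := (Fact.out : p.Prime).two_le; omega
    exact ⟨_, hpow (p - 2), by rw [Pi.pow_apply, hp, ZMod.pow_card_sub_one_eq_one hfi]⟩
  have hfinset : ∀ s : Finset ι, ∃ f ∈ R, ∀ i ∈ s, f i = 1 := fun s => by
    induction s using Finset.induction_on with
    | empty => exact ⟨0, zero_mem R, by simp⟩
    | insert i s _ ih =>
      obtain ⟨f, hf, hfs⟩ := ih
      obtain ⟨f', hf', hfi⟩ := hone i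
      refine ⟨f + f' + -(f * f'), add_mem (add_mem hf hf') (hneg _ (mul_mem hf hf')), ?_⟩
      refine Finset.forall_mem_insert _ _ _ |>.2 ⟨by simp [hfi], fun j hj => by simp [hfs j hj]⟩
  obtain ⟨f, hf, hf1⟩ := hfinset Finset.univ
  rwa [show (1 : ι → ZMod p) = f from funext fun i => (hf1 i (Finset.mem_univ i)).symm]

section HyperelementaryFixedPoints

universe u

variable (p : ℕ) (G : Type u) [Group G]

/-- The functions `g ↦ |S^g|` modulo `p`, for `S` a finite `G`-set with abelian-by-`p` point
stabilizers; sums and products come from disjoint unions and products of `G`-sets. -/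
def fixedPointFunctions : NonUnitalSubsemiring (G → ZMod p) where
  carrier := {f | ∃ (S : Type u) (_ : Finite S) (_ : MulAction G S),
    (∀ s : S, IsAbelianByPGroup p (MulAction.stabilizer G s)) ∧
      ∀ g, f g = Nat.card (MulAction.fixedBy S g)}
  zero_mem' := ⟨PEmpty, inferInstance,
    { smul := fun _ => id, one_smul := fun _ => rfl, mul_smul := fun _ _ _ => rfl },
    fun s => s.elim, fun g => by simp⟩
  add_mem' := by
    rintro f f' ⟨S, _, _, hS, hf⟩ ⟨S', _, _, hS', hf'⟩
    refine ⟨S ⊕ S', inferInstance, inferInstance, ?_, fun g => ?_⟩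
    · rintro (s | s)
      · have : MulAction.stabilizer G (Sum.inl s : S ⊕ S') = MulAction.stabilizer G s := by
          ext g; simp [MulAction.mem_stabilizer_iff]
        exact this ▸ hS s
      · have : MulAction.stabilizer G (Sum.inr s : S ⊕ S') = MulAction.stabilizer G s := by
          ext g; simp [MulAction.mem_stabilizer_iff]
        exact this ▸ hS' s
    · rw [Pi.add_apply, hf, hf', ← Nat.cast_add, ← Nat.card_sum]
      refine congrArg _ (Nat.card_congr (Equiv.trans ?_ Equiv.subtypeSum.symm))
      exact Equiv.sumCongr (Equiv.subtypeEquivRight fun s => by simp)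
        (Equiv.subtypeEquivRight fun s => by simp)
  mul_mem' := by
    rintro f f' ⟨S, _, _, hS, hf⟩ ⟨S', _, _, -, hf'⟩
    refine ⟨S × S', inferInstance, inferInstance, fun ⟨s, s'⟩ => ?_, fun g => ?_⟩
    · have hle : MulAction.stabilizer G (s, s') ≤ MulAction.stabilizer G s := fun g hg =>
        congrArg Prod.fst hg
      exact (hS s).of_injective (Subgroup.inclusion hle) (Subgroup.inclusion_injective hle)
    · rw [Pi.mul_apply, hf, hf', ← Nat.cast_mul, ← Nat.card_prod]
      exact congrArg _ (Nat.card_congr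
        { toFun := fun s => ⟨(s.1.1, s.2.1), Prod.ext s.1.2 s.2.2⟩
          invFun := fun s => (⟨s.1.1, congrArg Prod.fst s.2⟩, ⟨s.1.2, congrArg Prod.snd s.2⟩) })

variable [Fact p.Prime] [Finite G]

lemma one_mem_fixedPointFunctions : 1 ∈ fixedPointFunctions p G := by
  refine one_mem_of_forall_exists_apply_ne_zero _ fun g => ?_
  obtain ⟨H, hH, hdvd⟩ := exists_isAbelianByPGroup_not_dvd_card_fixedBy p g
  refine ⟨_, ⟨G ⧸ H, inferInstance, inferInstance, fun s => ?_, fun _ => rfl⟩,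
    by rwa [Ne, ZMod.natCast_eq_zero_iff]⟩
  have e := MulAction.stabilizerEquivStabilizerOfOrbitRel
    (MulAction.orbitRel_apply.2 (MulAction.exists_smul_eq G ((1 : G) : G ⧸ H) s))
  rw [MulAction.stabilizer_quotient] at e
  exact hH.of_injective e.toMonoidHom e.injective

theorem exists_finite_mulAction_card_fixedBy_modEq_one (k : ℕ) :
    ∃ (S : Type u) (_ : Finite S) (_ : MulAction G S),
      (∀ s : S, IsAbelianByPGroup p (MulAction.stabilizer G s)) ∧
      ∀ g : G, Nat.card (MulAction.fixedBy S g) ≡ 1 [MOD p ^ k] := by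
  obtain ⟨S, _, _, hS, hone⟩ := one_mem_fixedPointFunctions p G
  let M := Nat.totient (p ^ k)
  have hM : 0 < M := Nat.totient_pos.2 (pow_pos (Fact.out : p.Prime).pos k)
  refine ⟨Fin M → S, inferInstance, inferInstance, fun s => ?_, fun g => ?_⟩
  · have hle : MulAction.stabilizer G s ≤ MulAction.stabilizer G (s ⟨0, hM⟩) := fun g hg =>
      congrFun hg _
    exact (hS _).of_injective (Subgroup.inclusion hle) (Subgroup.inclusion_injective hle)
  · have e : MulAction.fixedBy (Fin M → S) g ≃ (Fin M → MulAction.fixedBy S g) :=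
      { toFun := fun s i => ⟨s.1 i, congrFun s.2 i⟩
        invFun := fun s => ⟨fun i => (s i).1, funext fun i => (s i).2⟩ }
    have hcard : Nat.card (MulAction.fixedBy (Fin M → S) g) =
        Nat.card (MulAction.fixedBy S g) ^ M := by
      rw [Nat.card_congr e, Nat.card_fun, Nat.card_fin]
    have hdvd : ¬ p ∣ Nat.card (MulAction.fixedBy S g) := fun h =>
      one_ne_zero ((hone g).trans ((ZMod.natCast_eq_zero_iff _ _).2 h))
    rw [hcard]
    exact Nat.ModEq.pow_totient
      (((Fact.out : p.Prime).coprime_iff_not_dvd.2 hdvd).pow_left k).symm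

end HyperelementaryFixedPoints

/-! ### Splitting fields -/

section Trace

variable {K V : Type*} [Field K] [AddCommGroup V] [Module K V] [FiniteDimensional K V]

lemma isIntegral_trace_of_pow_eq_one {f : Module.End K V} {n : ℕ} (hn : 0 < n) (hf : f ^ n = 1) :
    IsIntegral ℤ (LinearMap.trace K V f) := by
  classical
  let b := Module.finBasis K V
  let L := AlgebraicClosure K
  let B := (algebraMap K L).mapMatrix (LinearMap.toMatrix b b f)
  have hB : B ^ n = 1 := by
    rw [← map_pow, LinearMap.toMatrix_pow, hf, LinearMap.toMatrix_one, map_one]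
  rw [LinearMap.trace_eq_matrix_trace K b,
    ← isIntegral_algebraMap_iff (B := L) (FaithfulSMul.algebraMap_injective K L),
    AddMonoidHom.map_trace, Matrix.trace_eq_sum_roots_charpoly]
  refine IsIntegral.multiset_sum fun x hx => ?_
  have hx : Module.End.HasEigenvalue (Matrix.toLin' B) x := by
    rw [Module.End.hasEigenvalue_iff_isRoot_charpoly, Matrix.charpoly_toLin']
    exact Polynomial.isRoot_of_mem_roots hx
  obtain ⟨v, hv⟩ := hx.exists_hasEigenvector
  have hpow := hv.pow_apply n
  rw [← Matrix.toLin'_pow, hB, Matrix.toLin'_one, LinearMap.id_apply] at hpow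
  have hxn : x ^ n = 1 := smul_left_injective L hv.2 (by simpa using hpow.symm)
  exact IsIntegral.of_pow hn (hxn ▸ isIntegral_one)

lemma isIntegral_character {G : Type*} [Group G] [Finite G] (ρ : Representation K G V) (g : G) :
    IsIntegral ℤ (ρ.character g) :=
  isIntegral_trace_of_pow_eq_one Nat.card_pos (by rw [← map_pow, pow_card_eq_one', map_one])

end Trace

lemma int_dvd_of_isIntegral_of_cast_eq_mul {K : Type*} [Field K] [CharZero K] {a n : ℤ} (ha : a ≠ 0)
    {z : K} (hz : IsIntegral ℤ z) (h : (n : K) = a * z) : a ∣ n := by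
  have hz' : z = algebraMap ℚ K (n / a) := by
    rw [map_div₀, eq_div_iff (by simpa using ha), mul_comm]
    simpa using h.symm
  rw [hz', isIntegral_algebraMap_iff (FaithfulSMul.algebraMap_injective ℚ K),
    IsIntegrallyClosed.isIntegral_iff] at hz
  obtain ⟨b, hb⟩ := hz
  rw [eq_div_iff (by exact_mod_cast ha), mul_comm] at hb
  exact ⟨b, Int.cast_injective (α := ℚ) (by rw [Int.cast_mul]; exact hb.symm)⟩

lemma card_mul_dvd_sum_of_card_stabilizer_mul_dvd {G S : Type*} [Group G] [Fintype S]
    [MulAction G S] {f : S → ℕ} {m : ℕ} (hf : ∀ (g : G) s, f (g • s) = f s)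
    (hdvd : ∀ s, Nat.card (MulAction.stabilizer G s) * m ∣ f s) : Nat.card G * m ∣ ∑ s, f s := by
  classical
  rw [← Finset.sum_fiberwise Finset.univ (Quotient.mk (MulAction.orbitRel G S))]
  refine Finset.dvd_sum fun o _ => ?_
  induction o using Quotient.inductionOn with | _ s =>
  have hconst : ∀ t ∈ Finset.univ.filter
      (fun t => Quotient.mk (MulAction.orbitRel G S) t = Quotient.mk _ s), f t = f s := by
    intro t ht
    obtain ⟨g, rfl⟩ := Quotient.exact (Finset.mem_filter.1 ht).2
    exact hf g s
  have hcard : (Finset.univ.filter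
      (fun t => Quotient.mk (MulAction.orbitRel G S) t = Quotient.mk _ s)).card =
        Nat.card (MulAction.orbit G s) := by
    rw [Nat.card_eq_fintype_card, Fintype.card_subtype]
    exact congrArg _ (Finset.filter_congr fun t _ => Quotient.eq)
  rw [Finset.sum_congr rfl hconst, Finset.sum_const, smul_eq_mul, hcard,
    ← Nat.card_congr (MulAction.orbitProdStabilizerEquivGroup G s), Nat.card_prod, mul_assoc]
  exact Nat.mul_dvd_mul_left _ (hdvd s)

lemma finrank_dvd_of_algHom_matrix {K D : Type*} [Field K] [DivisionRing D] [Algebra K D] {d : ℕ}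
    (φ : D →ₐ[K] Matrix (Fin d) (Fin d) K) : Module.finrank K D ∣ d := by
  let _ : Module D (Fin d → K) :=
    Module.compHom _ (Matrix.toLinAlgEquiv'.toAlgHom.comp φ).toRingHom
  have : IsScalarTower K D (Fin d → K) := ⟨fun c a v => by
    change (Matrix.toLinAlgEquiv'.toAlgHom.comp φ) (c • a) v = _
    rw [map_smul]
    rfl⟩
  have := Module.finrank_mul_finrank K D (Fin d → K)
  rw [Module.finrank_fin_fun] at this
  exact Dvd.intro _ this

section Splitting

open Representation

variable {K : Type*} [Field K]

namespace IsAbelianByPGroup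

variable {p : ℕ} [Fact p.Prime] {H V : Type*} [Group H] [Finite H]
  [HasEnoughRootsOfUnity K (Monoid.exponent H)] [AddCommGroup V] [Module K V]
  [FiniteDimensional K V]

lemma algebraMap_moduleEnd_surjective (hH : IsAbelianByPGroup p H) [Module (MonoidAlgebra K H) V]
    [IsScalarTower K (MonoidAlgebra K H) V] [IsSimpleModule (MonoidAlgebra K H) V] :
    Function.Surjective (algebraMap K (Module.End (MonoidAlgebra K H) V)) := by
  let ρ := ofModule' (k := K) (G := H) V
  let e : ρ.asModule ≃ₗ[MonoidAlgebra K H] V :=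
    { ρ.asModuleEquiv with
      map_smul' := fun a v => by
        change ρ.asAlgebraHom a (ρ.asModuleEquiv v) = a • ρ.asModuleEquiv v
        simp [ρ, asAlgebraHom, ofModule'] }
  have : ρ.IsIrreducible := (irreducible_iff_isSimpleModule_asModule ρ).2 (IsSimpleModule.congr e)
  intro f
  obtain ⟨c, hc⟩ := hH.algebraMap_intertwiningMap_surjective ρ
    ⟨f.restrictScalars K, fun g => LinearMap.ext fun v => f.map_smul (MonoidAlgebra.of K H g) v⟩
  exact ⟨c, LinearMap.ext fun v => DFunLike.congr_fun hc v⟩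

lemma exists_algEquiv_pi_matrix [CharZero K] (hH : IsAbelianByPGroup p H)
    (ρ : Representation K H V) : ∃ (n : ℕ) (d : Fin n → ℕ),
      Nonempty (ρ.IntertwiningMap ρ ≃ₐ[K] Π i, Matrix (Fin (d i)) (Fin (d i)) K) := by
  have : NeZero (Nat.card H : K) := ⟨by exact_mod_cast Nat.card_pos.ne'⟩
  have : Module.Finite (MonoidAlgebra K H) ρ.asModule :=
    Module.Finite.of_restrictScalars_finite K _ _
  obtain ⟨n, S, d, hS, -, ⟨e⟩⟩ :=
    IsSemisimpleModule.exists_end_algEquiv_pi_matrix_end K (MonoidAlgebra K H) ρ.asModule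
  have hbij : ∀ i, Function.Bijective
      (Algebra.ofId K (Module.End (MonoidAlgebra K H) (S i))) := fun i => by
    have := hS i
    have := IsSimpleModule.nontrivial (MonoidAlgebra K H) (S i)
    have : FiniteDimensional K (S i) := FiniteDimensional.of_injective
      ((S i).subtype.restrictScalars K) Subtype.val_injective
    exact ⟨RingHom.injective _, hH.algebraMap_moduleEnd_surjective⟩
  exact ⟨n, d, ⟨(IntertwiningMap.equivAlgEnd ρ).trans (e.trans (AlgEquiv.piCongrRight fun i =>
    (AlgEquiv.ofBijective _ (hbij i)).symm.mapMatrix))⟩⟩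

lemma sq_finrank_dvd_finrank_intertwiningMap [CharZero K] (hH : IsAbelianByPGroup p H)
    {ρ : Representation K H V} {D : Type*} [DivisionRing D] [Algebra K D]
    (φ : D →ₐ[K] ρ.IntertwiningMap ρ) :
    Module.finrank K D ^ 2 ∣ Module.finrank K (ρ.IntertwiningMap ρ) := by
  obtain ⟨n, d, ⟨e⟩⟩ := hH.exists_algEquiv_pi_matrix ρ
  rw [e.toLinearEquiv.finrank_eq, Module.finrank_pi_fintype]
  refine Finset.dvd_sum fun i _ => ?_
  rw [Module.finrank_matrix, Fintype.card_fin, Module.finrank_self, mul_one, ← sq]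
  exact pow_dvd_pow_of_dvd
    (finrank_dvd_of_algHom_matrix ((Pi.evalAlgHom K _ i).comp (e.toAlgHom.comp φ))) 2

end IsAbelianByPGroup

variable {G V : Type*} [Group G] [AddCommGroup V] [Module K V]

/-- Restriction of `G`-endomorphisms of a representation to a subgroup `H`. -/
def restrictIntertwiningMap (ρ : Representation K G V) (H : Subgroup G) :
    ρ.IntertwiningMap ρ →ₐ[K] IntertwiningMap (ρ.comp H.subtype) (ρ.comp H.subtype) where
  toFun f := ⟨f.toLinearMap, fun h => f.isIntertwining' h⟩
  map_one' := rfl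
  map_mul' _ _ := rfl
  map_zero' := rfl
  map_add' _ _ := rfl
  commutes' _ := rfl

lemma finrank_intertwiningMap_self_pos [FiniteDimensional K V] (ρ : Representation K G V)
    [ρ.IsIrreducible] :
    0 < Module.finrank K (ρ.IntertwiningMap ρ) := by
  have := IsSimpleModule.nontrivial (MonoidAlgebra K G) ρ.asModule
  have : Nontrivial (ρ.IntertwiningMap ρ) := (IntertwiningMap.equivAlgEnd ρ).toEquiv.nontrivial
  have : FiniteDimensional K (ρ.IntertwiningMap ρ) :=
    FiniteDimensional.of_injective (IntertwiningMap.toLinearMapl ρ ρ)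
      (IntertwiningMap.toLinearMap_injective ρ ρ)
  exact Module.finrank_pos

variable [CharZero K] [FiniteDimensional K V]

lemma card_mul_finrank_intertwiningMap [Fintype G] {W : Type*} [AddCommGroup W] [Module K W]
    [FiniteDimensional K W] (ρ : Representation K G V) (σ : Representation K G W) :
    ((Nat.card G * Module.finrank K (ρ.IntertwiningMap σ) : ℕ) : K) =
      ∑ g, σ.character g * ρ.character g⁻¹ := by
  have hG : (Nat.card G : K) ≠ 0 := by exact_mod_cast Nat.card_pos.ne'
  have := invertibleOfNonzero hG
  rw [Nat.cast_mul, ← card_inv_mul_sum_char_mul_char_eq_finrank, mul_inv_cancel_left₀ hG]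

/-- The dimension of `End_H(V)`, for a representation `V` of `G` and a subgroup `H ≤ G`. -/
def finrankEnd (ρ : Representation K G V) (H : Subgroup G) : ℕ :=
  Module.finrank K (IntertwiningMap (ρ.comp H.subtype) (ρ.comp H.subtype))

section FixedPointSum

variable {S : Type*} [MulAction G S]

lemma card_stabilizer_mul_finrankEnd [Fintype G] [DecidableEq S] (ρ : Representation K G V)
    (s : S) :
    ((Nat.card (MulAction.stabilizer G s) * finrankEnd ρ (MulAction.stabilizer G s) : ℕ) : K) =
      ∑ g : G, if g • s = s then ρ.character g * ρ.character g⁻¹ else 0 := by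
  rw [finrankEnd, card_mul_finrank_intertwiningMap, ← Finset.sum_filter]
  exact (Finset.sum_subtype _ (fun g => by simp [MulAction.mem_stabilizer_iff])
    fun g => ρ.character g * ρ.character g⁻¹).symm

lemma card_stabilizer_smul_mul_finrankEnd [Finite G] (ρ : Representation K G V) (h : G) (s : S) :
    Nat.card (MulAction.stabilizer G (h • s)) * finrankEnd ρ (MulAction.stabilizer G (h • s)) =
      Nat.card (MulAction.stabilizer G s) * finrankEnd ρ (MulAction.stabilizer G s) := by
  classical
  have := Fintype.ofFinite G
  refine Nat.cast_injective (R := K) ?_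
  rw [card_stabilizer_mul_finrankEnd, card_stabilizer_mul_finrankEnd]
  refine Fintype.sum_equiv (MulAut.conj h⁻¹).toEquiv _ _ fun g => ?_
  have hg : (MulAut.conj h⁻¹).toEquiv g = h⁻¹ * g * h⁻¹⁻¹ := rfl
  have hfix : (h⁻¹ * g * h⁻¹⁻¹) • s = s ↔ g • h • s = h • s := by
    rw [inv_inv, mul_smul, mul_smul, inv_smul_eq_iff]
  simp only [hg, hfix, conj_inv, char_conj]

variable [Fintype S]

lemma sum_card_stabilizer_mul_finrankEnd [Fintype G] (ρ : Representation K G V) :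
    ((∑ s : S, Nat.card (MulAction.stabilizer G s) *
      finrankEnd ρ (MulAction.stabilizer G s) : ℕ) : K) =
      ∑ g, (Nat.card (MulAction.fixedBy S g) : K) * (ρ.character g * ρ.character g⁻¹) := by
  classical
  rw [Nat.cast_sum]
  simp_rw [card_stabilizer_mul_finrankEnd]
  rw [Finset.sum_comm]
  refine Finset.sum_congr rfl fun g _ => ?_
  rw [← Finset.sum_filter, Finset.sum_const, nsmul_eq_mul, Nat.card_eq_fintype_card,
    Fintype.card_subtype]
  rfl

lemma sum_card_stabilizer_mul_finrankEnd_modEq [Finite G] (ρ : Representation K G V) {m : ℕ}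
    (hm : m ≠ 0) (hS : ∀ g : G, Nat.card (MulAction.fixedBy S g) ≡ 1 [MOD m]) :
    ∑ s : S, Nat.card (MulAction.stabilizer G s) * finrankEnd ρ (MulAction.stabilizer G s) ≡
      Nat.card G * Module.finrank K (ρ.IntertwiningMap ρ) [MOD m] := by
  have := Fintype.ofFinite G
  choose c hc using fun g => Nat.modEq_iff_dvd.1 (hS g).symm
  refine (Nat.modEq_iff_dvd.2 (int_dvd_of_isIntegral_of_cast_eq_mul (K := K)
    (z := ∑ g, (c g : K) * (ρ.character g * ρ.character g⁻¹)) (by exact_mod_cast hm)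
    (IsIntegral.sum _ fun g _ => (isIntegral_algebraMap (x := c g)).mul
      ((isIntegral_character ρ g).mul (isIntegral_character ρ g⁻¹))) ?_)).symm
  rw [Int.cast_sub, Int.cast_natCast, Int.cast_natCast, sum_card_stabilizer_mul_finrankEnd,
    card_mul_finrank_intertwiningMap, ← Finset.sum_sub_distrib, Finset.mul_sum]
  refine Finset.sum_congr rfl fun g _ => ?_
  have hcg : (Nat.card (MulAction.fixedBy S g) : K) - 1 = m * c g := by
    exact_mod_cast congrArg (Int.cast : ℤ → K) (hc g)
  rw [Int.cast_natCast]
  linear_combination (ρ.character g * ρ.character g⁻¹) * hcg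

end FixedPointSum

lemma not_modEq_mul_of_mul_sq_dvd {p a q F : ℕ} (hp : p.Prime) (ha : 0 < a) (hq : 0 < q)
    (hpq : p ∣ q) (hF : a * q ^ 2 ∣ F) : ¬ F ≡ a * q [MOD p ^ (a * q)] := by
  intro hmod
  obtain ⟨t, rfl⟩ := hF
  obtain ⟨r, rfl⟩ := hpq
  have hdvd := Nat.modEq_iff_dvd.1 hmod.symm
  have hfactor : ((a * (p * r) ^ 2 * t : ℕ) : ℤ) - (a * (p * r) : ℕ) =
      (a * (p * r) : ℕ) * (p * r * t - 1) := by push_cast; ring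
  have hcoprime : IsCoprime (((p ^ (a * (p * r)) : ℕ)) : ℤ) (p * r * t - 1) := by
    rw [Nat.cast_pow]
    exact IsCoprime.pow_left ⟨r * t, -1, by ring⟩
  rw [hfactor] at hdvd
  exact (Nat.lt_pow_self hp.one_lt).not_ge
    (Nat.le_of_dvd (Nat.mul_pos ha hq) (by exact_mod_cast hcoprime.dvd_of_dvd_mul_right hdvd))

variable [Finite G] [HasEnoughRootsOfUnity K (Monoid.exponent G)]

lemma IsAbelianByPGroup.sq_finrank_intertwiningMap_dvd_finrankEnd {p : ℕ} [Fact p.Prime]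
    {H : Subgroup G} (hH : IsAbelianByPGroup p H) (ρ : Representation K G V) [ρ.IsIrreducible] :
    Module.finrank K (ρ.IntertwiningMap ρ) ^ 2 ∣ finrankEnd ρ H := by
  classical
  have : NeZero (Monoid.exponent G) := ⟨Monoid.exponent_ne_zero_of_finite⟩
  have : HasEnoughRootsOfUnity K (Monoid.exponent H) :=
    HasEnoughRootsOfUnity.of_dvd K (Monoid.exponent_submonoid_dvd H.toSubmonoid)
  let e := IntertwiningMap.equivAlgEnd ρ
  rw [e.toLinearEquiv.finrank_eq]
  exact hH.sq_finrank_dvd_finrank_intertwiningMap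
    ((restrictIntertwiningMap ρ H).comp e.symm.toAlgHom)

theorem finrank_intertwiningMap_self_eq_one (ρ : Representation K G V) [ρ.IsIrreducible] :
    Module.finrank K (ρ.IntertwiningMap ρ) = 1 := by
  set q := Module.finrank K (ρ.IntertwiningMap ρ)
  have hq0 : 0 < q := finrank_intertwiningMap_self_pos ρ
  by_contra hq1
  obtain ⟨p, hp, hpq⟩ := Nat.exists_prime_and_dvd hq1
  have : Fact p.Prime := ⟨hp⟩
  obtain ⟨S, _, _, hS, hfix⟩ :=
    exists_finite_mulAction_card_fixedBy_modEq_one p G (Nat.card G * q)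
  have := Fintype.ofFinite S
  refine not_modEq_mul_of_mul_sq_dvd hp Nat.card_pos hq0 hpq ?_
    (sum_card_stabilizer_mul_finrankEnd_modEq ρ (pow_ne_zero _ hp.ne_zero) hfix)
  exact card_mul_dvd_sum_of_card_stabilizer_mul_dvd (card_stabilizer_smul_mul_finrankEnd ρ)
    fun s => Nat.mul_dvd_mul_left _ ((hS s).sq_finrank_intertwiningMap_dvd_finrankEnd ρ)

end Splitting

section FDRep

open CategoryTheory

universe u v

variable {K : Type u} {G : Type v} [Field K] [Group G] {V W : FDRep K G}

/-- Morphisms of `FDRep K G` are the intertwining maps of the underlying representations. -/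
def fdRepHomEquiv : (V ⟶ W) ≃+ Representation.IntertwiningMap V.ρ W.ρ where
  toFun f := ((forget₂ (FDRep K G) (Rep K G)).map f).hom
  invFun f := FDRep.forget₂HomLinearEquiv V W (Rep.ofHom f)
  left_inv _ := rfl
  right_inv _ := rfl
  map_add' _ _ := rfl

lemma mono_iff_injective_fdRepHomEquiv (f : V ⟶ W) :
    Mono f ↔ Function.Injective (fdRepHomEquiv f) :=
  ⟨fun _ => (Rep.mono_iff_injective ((forget₂ (FDRep K G) (Rep K G)).map f)).1 inferInstance,
    fun h => (forget₂ _ _).mono_of_mono_map ((Rep.mono_iff_injective _).2 h)⟩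

lemma isIso_iff_bijective_fdRepHomEquiv (f : V ⟶ W) :
    IsIso f ↔ Function.Bijective (fdRepHomEquiv f) :=
  ⟨fun _ => ConcreteCategory.bijective_of_isIso ((forget₂ (FDRep K G) (Rep K G)).map f), fun h => by
    have : IsIso ((forget₂ (FDRep K G) (Rep K G)).map f) :=
      (ConcreteCategory.isIso_iff_bijective _).2 h
    exact isIso_of_reflects_iso f (forget₂ (FDRep K G) (Rep K G))⟩

/-- The inclusion of a subrepresentation into the ambient representation. -/
def subrepresentationInclusion {V : Type*} [AddCommGroup V] [Module K V] {ρ : Representation K G V}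
    (U : Subrepresentation ρ) : U.toRepresentation.IntertwiningMap ρ where
  toLinearMap := U.toSubmodule.subtype
  isIntertwining' _ := rfl

lemma isIrreducible_of_simple (V : FDRep K G) [Simple V] : Representation.IsIrreducible V.ρ where
  exists_pair_ne := by
    have : Nontrivial V := not_subsingleton_iff_nontrivial.1 fun _ => id_nonzero V <|
      fdRepHomEquiv.injective <| Representation.IntertwiningMap.ext <| LinearMap.ext fun v =>
        Subsingleton.elim (α := V) _ _
    exact ⟨⊥, ⊤, fun h => bot_ne_top (congrArg Subrepresentation.toSubmodule h)⟩
  eq_bot_or_eq_top U := by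
    let f : FDRep.of U.toRepresentation ⟶ V :=
      fdRepHomEquiv.symm (subrepresentationInclusion U)
    have hf : Mono f := (mono_iff_injective_fdRepHomEquiv f).2 Subtype.val_injective
    refine or_iff_not_imp_left.2 fun hU => ?_
    have hf0 : f ≠ 0 := fun h => hU <| Subrepresentation.toSubmodule_injective <|
      (Submodule.eq_bot_iff _).2 fun u hu => congrArg
        (fun k : FDRep.of U.toRepresentation ⟶ V => fdRepHomEquiv k (⟨u, hu⟩ : U.toSubmodule)) h
    have hiso : IsIso f := (Simple.mono_isIso_iff_nonzero f).2 hf0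
    refine Subrepresentation.toSubmodule_injective (Submodule.eq_top_iff'.2 fun v => ?_)
    obtain ⟨u, rfl⟩ := ((isIso_iff_bijective_fdRepHomEquiv f).1 hiso).2 v
    exact u.2

lemma simple_of_isIrreducible (V : FDRep K G) [Representation.IsIrreducible V.ρ] : Simple V where
  mono_isIso_iff_nonzero {W} f _ := by
    refine ⟨fun _ hf => ?_, fun hf => (isIso_iff_bijective_fdRepHomEquiv f).2
      ⟨(mono_iff_injective_fdRepHomEquiv f).1 inferInstance,
        (Representation.IsIrreducible.surjective_or_eq_zero _).resolve_right fun h =>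
          hf (fdRepHomEquiv.map_eq_zero_iff.1 h)⟩⟩
    have : Nontrivial V := nontrivial_of_isIrreducible V.ρ
    obtain ⟨v, hv⟩ := exists_ne (0 : V)
    obtain ⟨w, rfl⟩ := ((isIso_iff_bijective_fdRepHomEquiv f).1 inferInstance).2 v
    exact hv (congrArg (fun k => fdRepHomEquiv k w) hf)

end FDRep

/-! ### Gallagher's theorem -/

section Twist

open Representation

variable {K G V W : Type*} [Field K] [Group G] [AddCommGroup V] [Module K V] [AddCommGroup W]
  [Module K W]

lemma isIrreducible_of_linearEquiv {N : Type*} [Group N] {τ : Representation K N V}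
    [τ.IsIrreducible] {ρ : Representation K G W} (φ : N →* G) (e : V ≃ₗ[K] W)
    (he : ∀ n v, e (τ n v) = ρ (φ n) (e v)) : ρ.IsIrreducible where
  exists_pair_ne := by
    have := nontrivial_of_isIrreducible τ
    have := e.symm.toEquiv.nontrivial
    exact ⟨⊥, ⊤, fun h => bot_ne_top (congrArg Subrepresentation.toSubmodule h)⟩
  eq_bot_or_eq_top U := by
    let U' : Subrepresentation τ :=
      ⟨U.toSubmodule.comap e.toLinearMap, fun n v hv => by
        rw [Submodule.mem_comap, LinearEquiv.coe_coe, he]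
        exact U.apply_mem_toSubmodule (φ n) hv⟩
    have hU : U.toSubmodule = U'.toSubmodule.map e.toLinearMap :=
      (Submodule.map_comap_eq_of_surjective e.surjective _).symm
    refine (eq_bot_or_eq_top U').imp (fun h => ?_) fun h => ?_ <;>
      refine Subrepresentation.toSubmodule_injective (hU.trans ?_) <;> rw [h]
    · exact Submodule.map_bot _
    · exact (Submodule.map_top _).trans e.range

/-- The determinantal character of a representation. -/
def detChar (ρ : Representation K G V) : G →* Kˣ :=
  (LinearMap.det.comp ρ).toHomUnits

lemma coe_detChar (ρ : Representation K G V) (g : G) :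
    (detChar ρ g : K) = LinearMap.det (ρ g) := rfl

lemma detChar_eq_of_equiv {ρ : Representation K G V} {σ : Representation K G W} (e : ρ.Equiv σ) :
    detChar ρ = detChar σ := by
  ext g
  rw [coe_detChar, coe_detChar, ← LinearMap.det_conj (ρ g) e.toLinearEquiv]
  exact congrArg LinearMap.det (Equiv.conj_apply_self g e)

/-- The tensor product of a representation with a linear character. -/
def twist (l : G →* Kˣ) (ρ : Representation K G V) : Representation K G V where
  toFun g := (l g : K) • ρ g
  map_one' := by simp
  map_mul' g h := by
    rw [map_mul, map_mul, Units.val_mul, smul_mul_smul_comm]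

lemma twist_apply (l : G →* Kˣ) (ρ : Representation K G V) (g : G) :
    twist l ρ g = (l g : K) • ρ g := rfl

lemma character_twist (l : G →* Kˣ) (ρ : Representation K G V) (g : G) :
    (twist l ρ).character g = l g * ρ.character g := by
  rw [character, twist_apply, map_smul, smul_eq_mul, character]

lemma detChar_twist [FiniteDimensional K V] (l : G →* Kˣ) (ρ : Representation K G V) :
    detChar (twist l ρ) = l ^ Module.finrank K V * detChar ρ := by
  ext g
  rw [coe_detChar, twist_apply, LinearMap.det_smul]
  rfl

theorem nonempty_equiv_of_character_eq [CharZero K] [Finite G] [FiniteDimensional K V]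
    [FiniteDimensional K W] {ρ : Representation K G V} {σ : Representation K G W}
    [ρ.IsIrreducible] (h : ρ.character = σ.character) : Nonempty (ρ.Equiv σ) := by
  have := Fintype.ofFinite G
  have hdim : Module.finrank K V = Module.finrank K W := by
    exact_mod_cast (char_one ρ).symm.trans ((congrFun h 1).trans (char_one σ))
  have hfin : Module.finrank K (ρ.IntertwiningMap σ) = Module.finrank K (ρ.IntertwiningMap ρ) :=
    Nat.eq_of_mul_eq_mul_left (Nat.card_pos (α := G)) <| by
      exact_mod_cast (card_mul_finrank_intertwiningMap ρ σ).trans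
        ((congrArg (fun χ : G → K => ∑ g, χ g * ρ.character g⁻¹) h.symm).trans
          (card_mul_finrank_intertwiningMap ρ ρ).symm)
  have : Nontrivial (ρ.IntertwiningMap σ) :=
    Module.nontrivial_of_finrank_pos (R := K) (hfin ▸ finrank_intertwiningMap_self_pos ρ)
  obtain ⟨f, hf⟩ := exists_ne (0 : ρ.IntertwiningMap σ)
  have hinj := (IsIrreducible.injective_or_eq_zero f).resolve_right hf
  exact ⟨f.ofBijective ⟨hinj,
    (LinearMap.injective_iff_surjective_of_finrank_eq_finrank (f := f.toLinearMap) hdim).1 hinj⟩⟩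

lemma smul_apply_injective [Nontrivial V] (ρ : Representation K G V) (g : G) :
    Function.Injective fun c : K => c • ρ g := fun a b hab => by
  have hab := congrArg (· * ρ g⁻¹) hab
  simp only [smul_mul_assoc, ← map_mul, mul_inv_cancel, map_one] at hab
  exact smul_left_injective K one_ne_zero hab

section Gallagher

variable [CharZero K] [FiniteDimensional K V]

lemma exists_eq_smul_one_of_commute [Finite G] [HasEnoughRootsOfUnity K (Monoid.exponent G)]
    {ρ : Representation K G V} [ρ.IsIrreducible] {f : Module.End K V}
    (hf : ∀ g, Commute f (ρ g)) : ∃ c : K, f = c • 1 := by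
  let F : ρ.IntertwiningMap ρ := ⟨f, hf⟩
  have : Nontrivial V := nontrivial_of_isIrreducible ρ
  have h1 : (1 : ρ.IntertwiningMap ρ) ≠ 0 := fun h =>
    one_ne_zero (α := Module.End K V) (congrArg IntertwiningMap.toLinearMap h)
  obtain ⟨c, hc⟩ := exists_smul_eq_of_finrank_eq_one (finrank_intertwiningMap_self_eq_one ρ)
    h1 F
  exact ⟨c, congrArg IntertwiningMap.toLinearMap hc.symm⟩

lemma isIrreducible_of_character_comp_eq {N : Type*} [Group N] [Finite N] [FiniteDimensional K W]
    {τ : Representation K N V} [τ.IsIrreducible] {ρ : Representation K G W} (φ : N →* G)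
    (h : ∀ n, τ.character n = ρ.character (φ n)) : ρ.IsIrreducible := by
  obtain ⟨e⟩ := nonempty_equiv_of_character_eq (σ := ρ.comp φ) (funext h)
  exact isIrreducible_of_linearEquiv φ e.toLinearEquiv fun n v =>
    LinearMap.congr_fun (e.isIntertwining' n) v

variable {N : Subgroup G} [Finite N] [HasEnoughRootsOfUnity K (Monoid.exponent N)]

lemma exists_eq_twist_of_eqOn [N.Normal] (ρ σ : Representation K G V)
    (hρ : IsIrreducible (ρ.comp N.subtype)) (h : ∀ n ∈ N, σ n = ρ n) :
    ∃ l : G →* Kˣ, N ≤ l.ker ∧ σ = twist l ρ := by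
  have hscalar : ∀ g, ∃ c : K, σ g = c • ρ g := fun g => by
    have hcomm : ∀ n : N, Commute (σ g * ρ g⁻¹) (ρ.comp N.subtype n) := fun n => by
      have hn := ‹N.Normal›.conj_mem' n n.2 g
      calc σ g * ρ g⁻¹ * ρ n = σ g * ρ (g⁻¹ * n * g) * ρ g⁻¹ := by
            simp only [mul_assoc, ← map_mul, mul_inv_cancel, mul_one]
        _ = σ (g * (g⁻¹ * n * g)) * ρ g⁻¹ := by
            rw [← h _ hn, ← map_mul]
        _ = ρ n * (σ g * ρ g⁻¹) := by
            rw [mul_assoc, mul_inv_cancel_left, map_mul, h n n.2, mul_assoc]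
    obtain ⟨c, hc⟩ := exists_eq_smul_one_of_commute hcomm
    refine ⟨c, ?_⟩
    have := congrArg (· * ρ g) hc
    simpa only [mul_assoc, ← map_mul, inv_mul_cancel, map_one, mul_one, smul_mul_assoc,
      one_mul] using this
  choose c hc using hscalar
  have : Nontrivial V := nontrivial_of_isIrreducible (ρ.comp N.subtype)
  have hone : ∀ n ∈ N, c n = 1 := fun n hn =>
    smul_apply_injective ρ n (by simp only [← hc, h n hn, one_smul])
  let l : G →* K :=
    { toFun := c
      map_one' := hone 1 N.one_mem
      map_mul' := fun a b => smul_apply_injective ρ (a * b) <| by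
        dsimp only
        rw [← hc, map_mul, hc, hc, smul_mul_smul_comm, map_mul] }
  exact ⟨l.toHomUnits, fun n hn => Units.ext (hone n hn), MonoidHom.ext hc⟩

theorem exists_equiv_twist [N.Normal] [FiniteDimensional K W] (ρ : Representation K G V)
    (σ : Representation K G W) (hρ : IsIrreducible (ρ.comp N.subtype))
    (h : ∀ n ∈ N, ρ.character n = σ.character n) :
    ∃ l : G →* Kˣ, N ≤ l.ker ∧ Nonempty (σ.Equiv (twist l ρ)) := by
  obtain ⟨e⟩ := nonempty_equiv_of_character_eq (ρ := ρ.comp N.subtype) (σ := σ.comp N.subtype)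
    (funext fun n => h n n.2)
  let e' := e.toLinearEquiv.symm
  let σ' : Representation K G V := (e'.conjRingEquiv : Module.End K W →* Module.End K V).comp σ
  obtain ⟨l, hl, hσ⟩ := exists_eq_twist_of_eqOn ρ σ' hρ fun n hn =>
    Equiv.conj_apply_self (⟨n, hn⟩ : N) e.symm
  refine ⟨l, hl, ⟨Representation.Equiv.mk e' fun g => ?_⟩⟩
  rw [← hσ]
  ext v
  simp [σ', LinearEquiv.conjRingEquiv]

lemma eq_one_of_character_twist_eq [Finite G] {ρ : Representation K G V}
    (hρ : IsIrreducible (ρ.comp N.subtype)) {l : G →* Kˣ} (hl : N ≤ l.ker)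
    (h : (twist l ρ).character = ρ.character) : l = 1 := by
  have hirr : ρ.IsIrreducible :=
    isIrreducible_of_linearEquiv (τ := ρ.comp N.subtype) N.subtype (LinearEquiv.refl K V)
      fun _ _ => rfl
  obtain ⟨e⟩ := nonempty_equiv_of_character_eq h.symm
  have he : ∀ g, e.toLinearMap * ρ g = (l g : K) • ρ g * e.toLinearMap := e.isIntertwining'
  obtain ⟨c, hc⟩ := exists_eq_smul_one_of_commute (ρ := ρ.comp N.subtype) (f := e.toLinearMap)
    fun n => (he n).trans (by rw [hl n.2, Units.val_one, one_smul]; rfl)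
  have : Nontrivial V := nontrivial_of_isIrreducible ρ
  have hc0 : c ≠ 0 := fun h0 => by
    obtain ⟨v, hv⟩ := exists_ne (0 : V)
    refine hv (e.injective ?_)
    rw [map_zero]
    exact (LinearMap.congr_fun hc v).trans (by rw [h0, zero_smul, LinearMap.zero_apply])
  ext g
  refine smul_apply_injective ρ g (smul_right_injective _ hc0 ?_)
  have := he g
  simp only [hc, smul_one_mul, mul_smul_one] at this ⊢
  exact this.symm.trans (by simp)

lemma eq_of_character_twist_eq [Finite G] {ρ : Representation K G V}
    (hρ : IsIrreducible (ρ.comp N.subtype)) {l l' : G →* Kˣ} (hl : N ≤ l.ker) (hl' : N ≤ l'.ker)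
    (h : (twist l ρ).character = (twist l' ρ).character) : l = l' := by
  refine inv_mul_eq_one.1 (eq_one_of_character_twist_eq hρ (fun n hn => ?_) (funext fun g => ?_))
  · rw [MonoidHom.mem_ker, MonoidHom.mul_apply, MonoidHom.inv_apply, hl hn, hl' hn, inv_one,
      one_mul]
  · rw [character_twist, MonoidHom.mul_apply, Units.val_mul, mul_assoc, ← character_twist, ← h,
      character_twist, MonoidHom.inv_apply, Units.inv_mul_cancel_left]

end Gallagher

end Twist

/-! ### Extensions with a coprime determinantal character -/

section CoprimeTorsion

variable {p : ℕ} {A : Type*} [CommGroup A]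

/-- The subgroup of a commutative group formed by the elements of (finite) order prime to `p`. -/
def coprimeTorsion (p : ℕ) (A : Type*) [CommGroup A] : Subgroup A where
  carrier := {a | (orderOf a).Coprime p}
  one_mem' := by simp
  mul_mem' {a b} ha hb := Nat.Coprime.of_dvd_left
    ((Commute.all a b).orderOf_mul_dvd_lcm.trans (Nat.lcm_dvd_mul _ _)) (Nat.Coprime.mul_left ha hb)
  inv_mem' {a} ha := by rwa [Set.mem_ofPred_eq, orderOf_inv]

lemma mem_coprimeTorsion_of_pow_mem {a : A} {n : ℕ} (hn : n.Coprime p)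
    (ha : a ^ n ∈ coprimeTorsion p A) : a ∈ coprimeTorsion p A :=
  Nat.Coprime.of_dvd_left (orderOf_dvd_of_pow_eq_one (by rw [pow_mul, pow_orderOf_eq_one]))
    (hn.mul_left ha)

lemma not_dvd_card_of_le_coprimeTorsion [Fact p.Prime] {S : Subgroup A} [Finite S]
    (hS : S ≤ coprimeTorsion p A) : ¬ p ∣ Nat.card S := fun h => by
  obtain ⟨x, hx⟩ := exists_prime_orderOf_dvd_card' p h
  have hcop : (orderOf (x : A)).Coprime p := hS x.2
  rw [Subgroup.orderOf_coe, hx, Nat.coprime_self] at hcop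
  exact (Fact.out : p.Prime).ne_one hcop

lemma exists_pow_mul_add_one_mem_coprimeTorsion [Finite A] (hp : p.Prime) (a : A) {n : ℕ}
    (hn : n.Coprime p) : ∃ k : ℕ, a ^ (n * k + 1) ∈ coprimeTorsion p A := by
  obtain ⟨b, m, hm, hcard⟩ := Nat.exists_eq_pow_mul_and_not_dvd (orderOf_pos a).ne' p hp.ne_one
  have : NeZero (p ^ b) := ⟨pow_ne_zero _ hp.ne_zero⟩
  let u := ZMod.unitOfCoprime n (hn.pow_right b)
  let k := (-(u⁻¹).val).val
  obtain ⟨q, hq⟩ : p ^ b ∣ n * k + 1 := by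
    rw [← ZMod.natCast_eq_zero_iff, Nat.cast_add, Nat.cast_mul, ZMod.natCast_zmod_val, Nat.cast_one,
      mul_neg, ← ZMod.coe_unitOfCoprime n (hn.pow_right b), Units.mul_inv, neg_add_cancel]
  refine ⟨k, Nat.Coprime.of_dvd_left (orderOf_dvd_of_pow_eq_one (n := m) ?_)
    ((hp.coprime_iff_not_dvd.2 hm).symm)⟩
  rw [← pow_mul, hq, mul_right_comm, ← hcard, pow_mul, pow_orderOf_eq_one, one_pow]

end CoprimeTorsion

section LinearCharacters

variable {T A : Type*} [Group T] [CommGroup A] {N J : Subgroup T}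

lemma mem_ker_domRestrictHom {l : T →* A} :
    l ∈ (MonoidHom.domRestrictHom N A).ker ↔ N ≤ l.ker :=
  ⟨fun h n hn => show l.domRestrict N ⟨n, hn⟩ = 1 by
    rw [show l.domRestrict N = 1 from h, MonoidHom.one_apply],
    fun h => MonoidHom.ext fun n => h n.2⟩

lemma eq_one_of_sup_eq_top (hNJ : N ⊔ J = ⊤) {l : T →* A} (hN : N ≤ l.ker)
    (hJ : l.domRestrict J = 1) : l = 1 :=
  l.ker_eq_top_iff.1 <| top_le_iff.1 <| hNJ ▸ sup_le hN fun j hj =>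
    show l.domRestrict J ⟨j, hj⟩ = 1 by rw [hJ, MonoidHom.one_apply]

lemma mem_coprimeTorsion_of_domRestrict_mem {p : ℕ} (hNJ : N ⊔ J = ⊤) {l : T →* A}
    (hN : N ≤ l.ker) (hJ : l.domRestrict J ∈ coprimeTorsion p (J →* A)) :
    l ∈ coprimeTorsion p (T →* A) := by
  refine Nat.Coprime.of_dvd_left (orderOf_dvd_of_pow_eq_one (eq_one_of_sup_eq_top hNJ ?_ ?_)) hJ
  · exact fun n hn => by
      rw [MonoidHom.mem_ker, MonoidHom.pow_apply, hN hn, one_pow]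
  · exact pow_orderOf_eq_one (l.domRestrict J)

lemma exists_domRestrict_eq [N.Normal] (hNJ : N ⊔ J = ⊤) (D : J →* A)
    (hD : N.subgroupOf J ≤ D.ker) :
    ∃ l : T →* A, N ≤ l.ker ∧ l.domRestrict J = D := by
  let f : J →* T ⧸ N := (QuotientGroup.mk' N).comp J.subtype
  have hf : Function.Surjective f := fun q => by
    obtain ⟨t, rfl⟩ := QuotientGroup.mk_surjective q
    obtain ⟨n, hn, j, hj, rfl⟩ := Subgroup.mem_sup_of_normal_left.1 (hNJ ▸ Subgroup.mem_top t)
    refine ⟨⟨j, hj⟩, ?_⟩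
    rw [QuotientGroup.mk_mul, (QuotientGroup.eq_one_iff n).2 hn, one_mul]
    rfl
  have hker : f.ker ≤ D.ker := fun j hj => hD ((QuotientGroup.eq_one_iff (j : T)).1 hj)
  refine ⟨(f.liftOfSurjective hf ⟨D, hker⟩).comp (QuotientGroup.mk' N), fun n hn => ?_, ?_⟩
  · rw [MonoidHom.mem_ker, MonoidHom.comp_apply, QuotientGroup.mk'_apply,
      (QuotientGroup.eq_one_iff n).2 hn, map_one]
  · ext1 j
    exact f.liftOfRightInverse_comp_apply _ (Function.rightInverse_surjInv hf) ⟨D, hker⟩ j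

end LinearCharacters

section CoprimeExtensions

open Representation

variable {K T V : Type*} [Field K] [Group T] [AddCommGroup V] [Module K V]

/-- The characters of `T` which agree with that of `ρ₀` on `N` and whose determinantal character
has order prime to `p` on `J`. -/
def coprimeExtensions (p : ℕ) (N J : Subgroup T) (ρ₀ : Representation K T V) : Set (T → K) :=
  {χ | ∃ ρ : Representation K T V, ρ.character = χ ∧ (∀ n ∈ N, χ n = ρ₀.character n) ∧
    (detChar ρ).domRestrict J ∈ coprimeTorsion p (J →* Kˣ)}

lemma domRestrict_detChar_twist [FiniteDimensional K V] (J : Subgroup T) (l : T →* Kˣ)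
    (ρ : Representation K T V) : (detChar (twist l ρ)).domRestrict J =
      l.domRestrict J ^ Module.finrank K V * (detChar ρ).domRestrict J := by
  rw [detChar_twist]
  rfl

variable [Finite T] [FiniteDimensional K V] {p : ℕ} {N J : Subgroup T} [N.Normal]
  {ρ₀ : Representation K T V}

lemma exists_eqOn_domRestrict_detChar_mem (hp : p.Prime)
    (hV : (Module.finrank K V).Coprime p) (hNJ : N ⊔ J = ⊤)
    (hdet : (detChar ρ₀).domRestrict (N ⊓ J : Subgroup T) ∈
      coprimeTorsion p ((N ⊓ J : Subgroup T) →* Kˣ)) :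
    ∃ ρ : Representation K T V, (∀ n ∈ N, ρ n = ρ₀ n) ∧
      (detChar ρ).domRestrict J ∈ coprimeTorsion p (J →* Kˣ) := by
  let D := (detChar ρ₀).domRestrict J
  let m := orderOf ((detChar ρ₀).domRestrict (N ⊓ J : Subgroup T))
  have hDm : N.subgroupOf J ≤ (D ^ m).ker := fun j hj => by
    have hDj : D j ^ m = 1 := DFunLike.congr_fun
      (pow_orderOf_eq_one ((detChar ρ₀).domRestrict (N ⊓ J : Subgroup T))) ⟨j, hj, j.2⟩
    exact hDj
  obtain ⟨l, hlN, hlJ⟩ := exists_domRestrict_eq hNJ (D ^ m) hDm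
  obtain ⟨k, hk⟩ := exists_pow_mul_add_one_mem_coprimeTorsion hp D (hV.mul_left hdet)
  have hlkN : N ≤ (l ^ k).ker := fun n hn => by
    rw [MonoidHom.mem_ker, MonoidHom.pow_apply, hlN hn, one_pow]
  refine ⟨twist (l ^ k) ρ₀, fun n hn => by
    rw [twist_apply, hlkN hn, Units.val_one, one_smul], ?_⟩
  convert hk using 1
  calc (detChar (twist (l ^ k) ρ₀)).domRestrict J
      = (l.domRestrict J ^ k) ^ Module.finrank K V * D := domRestrict_detChar_twist _ _ _
    _ = D ^ (Module.finrank K V * m * k + 1) := by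
      rw [hlJ]
      ext j
      simp only [MonoidHom.mul_apply, MonoidHom.pow_apply, ← pow_mul, ← pow_succ]
      congr 3
      ring

variable [CharZero K] [HasEnoughRootsOfUnity K (Monoid.exponent N)]

lemma mem_coprimeExtensions_iff {ρ : Representation K T V} (hirr : IsIrreducible (ρ.comp N.subtype))
    (hV : (Module.finrank K V).Coprime p) (hNJ : N ⊔ J = ⊤)
    (hdet : (detChar ρ).domRestrict J ∈ coprimeTorsion p (J →* Kˣ)) {χ : T → K} :
    χ ∈ coprimeExtensions p N J ρ ↔
      ∃ l ∈ coprimeTorsion p (T →* Kˣ), N ≤ l.ker ∧ (twist l ρ).character = χ := by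
  constructor
  · rintro ⟨σ, rfl, hσN, hσ⟩
    obtain ⟨l, hlN, ⟨e⟩⟩ := exists_equiv_twist ρ σ hirr fun n hn => (hσN n hn).symm
    refine ⟨l, mem_coprimeTorsion_of_domRestrict_mem hNJ hlN (mem_coprimeTorsion_of_pow_mem hV ?_),
      hlN, (char_iso e).symm⟩
    rw [detChar_eq_of_equiv e, domRestrict_detChar_twist] at hσ
    exact (Subgroup.mul_mem_cancel_right _ hdet).1 hσ
  · rintro ⟨l, hl, hlN, rfl⟩
    have hlJ : l.domRestrict J ∈ coprimeTorsion p (J →* Kˣ) :=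
      Nat.Coprime.of_dvd_left (orderOf_map_dvd (MonoidHom.domRestrictHom J Kˣ) l) hl
    refine ⟨twist l ρ, rfl, fun n hn => ?_, ?_⟩
    · rw [character_twist, hlN hn, Units.val_one, one_mul]
    · rw [domRestrict_detChar_twist]
      exact mul_mem (pow_mem hlJ _) hdet

lemma finite_and_not_dvd_card_coprimeExtensions_of_mem [Fact p.Prime] {ρ : Representation K T V}
    (hirr : IsIrreducible (ρ.comp N.subtype)) (hV : (Module.finrank K V).Coprime p)
    (hNJ : N ⊔ J = ⊤) (hdet : (detChar ρ).domRestrict J ∈ coprimeTorsion p (J →* Kˣ)) :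
    Finite (coprimeExtensions p N J ρ) ∧ ¬ p ∣ Nat.card (coprimeExtensions p N J ρ) := by
  let L : Subgroup (T →* Kˣ) :=
    coprimeTorsion p (T →* Kˣ) ⊓ (MonoidHom.domRestrictHom N Kˣ).ker
  let F : L → coprimeExtensions p N J ρ := fun l => ⟨(twist l.1 ρ).character,
    (mem_coprimeExtensions_iff hirr hV hNJ hdet).2
      ⟨l, l.2.1, mem_ker_domRestrictHom.1 l.2.2, rfl⟩⟩
  have hF : Function.Bijective F := by
    refine ⟨fun l l' h => Subtype.ext (eq_of_character_twist_eq hirr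
      (mem_ker_domRestrictHom.1 l.2.2) (mem_ker_domRestrictHom.1 l'.2.2)
      (congrArg Subtype.val h)), ?_⟩
    rintro ⟨χ, hχ⟩
    obtain ⟨l, hl, hlN, rfl⟩ := (mem_coprimeExtensions_iff hirr hV hNJ hdet).1 hχ
    exact ⟨⟨l, hl, mem_ker_domRestrictHom.2 hlN⟩, rfl⟩
  exact ⟨Finite.of_surjective F hF.2, Nat.card_congr (Equiv.ofBijective F hF) ▸
    not_dvd_card_of_le_coprimeTorsion inf_le_left⟩

theorem finite_and_not_dvd_card_coprimeExtensions [Fact p.Prime]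
    (hirr : IsIrreducible (ρ₀.comp N.subtype)) (hV : (Module.finrank K V).Coprime p)
    (hNJ : N ⊔ J = ⊤)
    (hdet : (detChar ρ₀).domRestrict (N ⊓ J : Subgroup T) ∈
      coprimeTorsion p ((N ⊓ J : Subgroup T) →* Kˣ)) :
    Finite (coprimeExtensions p N J ρ₀) ∧ ¬ p ∣ Nat.card (coprimeExtensions p N J ρ₀) := by
  obtain ⟨ρ, hρN, hρ⟩ := exists_eqOn_domRestrict_detChar_mem (Fact.out : p.Prime) hV hNJ hdet
  have hres : ρ.comp N.subtype = ρ₀.comp N.subtype := MonoidHom.ext fun n => hρN n n.2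
  have hext : coprimeExtensions p N J ρ₀ = coprimeExtensions p N J ρ := by
    unfold coprimeExtensions character
    simp +contextual only [hρN]
  exact hext ▸ finite_and_not_dvd_card_coprimeExtensions_of_mem (hres ▸ hirr) hV hNJ hρ

end CoprimeExtensions

section GaloisTwist

open Representation

variable {K T V : Type*} [Field K] [Group T] [AddCommGroup V] [Module K V] [FiniteDimensional K V]

/-- The Galois conjugate of a representation, obtained by applying a field endomorphism to the
matrix entries with respect to a (chosen) basis. -/
def galoisTwist (σ : K →+* K) (ρ : Representation K T V) : Representation K T V where
  toFun t := Matrix.toLinAlgEquiv (Module.finBasis K V)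
    (σ.mapMatrix (LinearMap.toMatrixAlgEquiv (Module.finBasis K V) (ρ t)))
  map_one' := by simp only [map_one]
  map_mul' s t := by simp only [map_mul]

lemma toMatrix_galoisTwist (σ : K →+* K) (ρ : Representation K T V) (t : T) :
    LinearMap.toMatrix (Module.finBasis K V) (Module.finBasis K V) (galoisTwist σ ρ t) =
      σ.mapMatrix (LinearMap.toMatrix (Module.finBasis K V) (Module.finBasis K V) (ρ t)) :=
  LinearMap.toMatrixAlgEquiv_toLinAlgEquiv _ _

lemma character_galoisTwist (σ : K →+* K) (ρ : Representation K T V) (t : T) :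
    (galoisTwist σ ρ).character t = σ (ρ.character t) := by
  simp only [character, LinearMap.trace_eq_matrix_trace K (Module.finBasis K V),
    toMatrix_galoisTwist]
  exact (AddMonoidHom.map_trace σ.toAddMonoidHom _).symm

lemma detChar_galoisTwist (σ : K →+* K) (ρ : Representation K T V) (t : T) :
    detChar (galoisTwist σ ρ) t = Units.map σ (detChar ρ t) := by
  ext
  simp only [coe_detChar, Units.coe_map, MonoidHom.coe_coe,
    ← LinearMap.det_toMatrix (Module.finBasis K V), toMatrix_galoisTwist]
  exact (σ.map_det _).symm

lemma comp_mem_coprimeExtensions {p : ℕ} {N J : Subgroup T} {ρ₀ : Representation K T V}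
    {χ : T → K} (hχ : χ ∈ coprimeExtensions p N J ρ₀) (σ : K →+* K) (α : T →* T)
    (hN : ∀ n ∈ N, α n ∈ N) (hρ₀ : ∀ n ∈ N, σ (ρ₀.character (α n)) = ρ₀.character n)
    (hJ : ∀ j ∈ J, ∃ j' ∈ J, IsConj j' (α j)) :
    (fun t => σ (χ (α t))) ∈ coprimeExtensions p N J ρ₀ := by
  obtain ⟨ρ, rfl, hρN, hdet⟩ := hχ
  refine ⟨galoisTwist σ (ρ.comp α), funext fun t => character_galoisTwist σ _ t,
    fun n hn => (congrArg σ (hρN _ (hN n hn))).trans (hρ₀ n hn),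
    Nat.Coprime.of_dvd_left (orderOf_dvd_of_pow_eq_one (MonoidHom.ext fun j => ?_)) hdet⟩
  obtain ⟨j', hj', hconj⟩ := hJ j j.2
  have hα : detChar (ρ.comp α) j = detChar ρ j' :=
    calc detChar (ρ.comp α) j = detChar ρ (α j) := Units.ext rfl
      _ = detChar ρ j' := (isConj_iff_eq.1 ((detChar ρ).map_isConj hconj)).symm
  have hj'1 : detChar ρ j' ^ orderOf ((detChar ρ).domRestrict J) = 1 :=
    DFunLike.congr_fun (pow_orderOf_eq_one ((detChar ρ).domRestrict J)) ⟨j', hj'⟩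
  calc detChar (galoisTwist σ (ρ.comp α)) j ^ orderOf ((detChar ρ).domRestrict J)
      = Units.map σ (detChar ρ j') ^ orderOf ((detChar ρ).domRestrict J) := by
        rw [detChar_galoisTwist, hα]
    _ = 1 := by rw [← map_pow, hj'1, map_one]

end GaloisTwist

section Equivariance

open Representation

variable {A K T V : Type*} [Group A] [Field K] [Group T] [AddCommGroup V] [Module K V]

/-- The action on functions `T → K` induced by actions on `T` (by automorphisms) and on `K`; its
fixed points are the equivariant functions. -/
abbrev functionAction (α : A →* MulAut T) (β : A →* RingAut K) : MulAction A (T → K) where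
  smul a χ t := β a (χ (α a⁻¹ t))
  one_smul χ := funext fun t => by
    change β 1 (χ (α 1⁻¹ t)) = χ t
    rw [inv_one, map_one, map_one]
    rfl
  mul_smul a b χ := funext fun t => by
    change β (a * b) (χ (α (a * b)⁻¹ t)) = β a (β b (χ (α b⁻¹ (α a⁻¹ t))))
    rw [mul_inv_rev, map_mul, map_mul]
    rfl

lemma exists_fixedPoint_of_pow_smul_eq {p : ℕ} [Fact p.Prime] {E : Type*} [MulAction A E]
    (hE : ¬ p ∣ Nat.card E) (h : ∀ a : A, ∃ k : ℕ, ∀ e : E, a ^ p ^ k • e = e) :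
    ∃ e : E, ∀ a : A, a • e = e := by
  have hP : IsPGroup p (MulAction.toPermHom A E).range := by
    rintro ⟨_, a, rfl⟩
    obtain ⟨k, hk⟩ := h a
    refine ⟨k, Subtype.ext ?_⟩
    change MulAction.toPermHom A E a ^ p ^ k = 1
    rw [← map_pow]
    exact Equiv.ext hk
  obtain ⟨e, he⟩ := hP.nonempty_fixed_point_of_prime_not_dvd_card E hE
  exact ⟨e, fun a => he ⟨_, a, rfl⟩⟩

/-- `A` acts, through a `p`-group, on the finite set of coprime extensions, whose cardinality is
prime to `p`. -/
theorem exists_mem_coprimeExtensions_equivariant [Finite T] [FiniteDimensional K V] [CharZero K]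
    {p : ℕ} [Fact p.Prime] {N J : Subgroup T} [N.Normal]
    [HasEnoughRootsOfUnity K (Monoid.exponent N)] {ρ₀ : Representation K T V}
    (hirr : IsIrreducible (ρ₀.comp N.subtype)) (hV : (Module.finrank K V).Coprime p)
    (hNJ : N ⊔ J = ⊤)
    (hdet : (detChar ρ₀).domRestrict (N ⊓ J : Subgroup T) ∈
      coprimeTorsion p ((N ⊓ J : Subgroup T) →* Kˣ))
    (α : A →* MulAut T) (β : A →* RingAut K) (hN : ∀ a, ∀ n ∈ N, α a n ∈ N)
    (hρ₀ : ∀ a, ∀ n ∈ N, ρ₀.character (α a n) = β a (ρ₀.character n))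
    (hJ : ∀ a, ∀ j ∈ J, ∃ j' ∈ J, IsConj j' (α a j))
    (hpow : ∀ a, ∃ k : ℕ, (∃ t, α (a ^ p ^ k) = MulAut.conj t) ∧ β (a ^ p ^ k) = 1) :
    ∃ χ ∈ coprimeExtensions p N J ρ₀, ∀ a t, χ (α a t) = β a (χ t) := by
  obtain ⟨hfin, hcard⟩ := finite_and_not_dvd_card_coprimeExtensions hirr hV hNJ hdet
  let := functionAction α β
  let E : SubMulAction A (T → K) :=
    { carrier := coprimeExtensions p N J ρ₀
      smul_mem' := fun a χ hχ => comp_mem_coprimeExtensions hχ (β a : K →+* K) (α a⁻¹ : T →* T)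
        (hN a⁻¹) (fun n hn => by
          change β a (ρ₀.character (α a⁻¹ n)) = _
          rw [← hρ₀ a _ (hN a⁻¹ n hn), map_inv, MulAut.apply_inv_self]) (hJ a⁻¹) }
  have : Finite E := hfin
  obtain ⟨⟨χ, hχ⟩, hfix⟩ := exists_fixedPoint_of_pow_smul_eq (A := A) (E := E) hcard fun a => by
    obtain ⟨k, ⟨s, hs⟩, hk⟩ := hpow a
    refine ⟨k, fun ⟨χ, ρ, hρ, _⟩ => Subtype.ext (funext fun t => ?_)⟩
    change β (a ^ p ^ k) (χ (α (a ^ p ^ k)⁻¹ t)) = χ t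
    rw [hk, map_inv, hs, ← map_inv, MulAut.conj_apply, ← hρ]
    exact char_conj ρ t s⁻¹
  refine ⟨χ, hχ, fun a t => ?_⟩
  have h : β a (χ (α a⁻¹ (α a t))) = χ (α a t) := congrFun (congrArg Subtype.val (hfix a)) (α a t)
  rw [← h, map_inv, MulAut.inv_apply_self]

end Equivariance

section ConjugationEquivariance

open Representation

variable {A K Γ V : Type*} [Group A] [Field K] [Group Γ] [AddCommGroup V] [Module K V]
  {N J T : Subgroup Γ}

lemma subgroupOf_sup_subgroupOf_eq_top (hNT : N ≤ T) (hNJ : (N : Set Γ) * (J : Set Γ) = Set.univ) :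
    N.subgroupOf T ⊔ J.subgroupOf T = ⊤ := by
  refine (Subgroup.eq_top_iff' _).2 fun ⟨t, ht⟩ => ?_
  obtain ⟨n, hn, j, hj, rfl⟩ : t ∈ (N : Set Γ) * (J : Set Γ) := hNJ ▸ Set.mem_univ t
  have hjT : j ∈ T := (T.mul_mem_cancel_left (hNT hn)).1 ht
  exact Subgroup.mul_mem_sup (x := (⟨n, hNT hn⟩ : T)) (y := ⟨j, hjT⟩) hn hj

lemma exists_mem_subgroupOf_isConj_conj (hNT : N ≤ T) (hNJ : (N : Set Γ) * (J : Set Γ) = Set.univ)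
    (g : Subgroup.normalizer (T : Set Γ)) {j : T} (hj : j ∈ J.subgroupOf T) :
    ∃ j' ∈ J.subgroupOf T, IsConj j' (T.normalizerMonoidHom g j) := by
  obtain ⟨n, hn, k, hk, hnk⟩ : (g : Γ) ∈ (N : Set Γ) * (J : Set Γ) := hNJ ▸ Set.mem_univ _
  have hconj : (T.normalizerMonoidHom g j : Γ) = n * (k * j * k⁻¹) * n⁻¹ := by
    change (g : Γ) * j * (g : Γ)⁻¹ = _
    rw [← hnk]
    group
  have hkT : k * j * k⁻¹ ∈ T := by
    rw [← T.mul_mem_cancel_left (hNT hn), ← T.mul_mem_cancel_right (T.inv_mem (hNT hn)), ← hconj]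
    exact (T.normalizerMonoidHom g j).2
  exact ⟨⟨_, hkT⟩, J.mul_mem (J.mul_mem hk hj) (J.inv_mem hk),
    isConj_iff.2 ⟨⟨n, hNT hn⟩, Subtype.ext hconj.symm⟩⟩

theorem exists_mem_coprimeExtensions_conj_equivariant [Finite T] [FiniteDimensional K V]
    [CharZero K] {p : ℕ} [Fact p.Prime] [hN : N.Normal]
    [HasEnoughRootsOfUnity K (Monoid.exponent (N.subgroupOf T))] (hNT : N ≤ T)
    (hNJ : (N : Set Γ) * (J : Set Γ) = Set.univ) {ρ₀ : Representation K T V}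
    (hirr : IsIrreducible (ρ₀.comp (N.subgroupOf T).subtype))
    (hV : (Module.finrank K V).Coprime p)
    (hdet : (detChar ρ₀).domRestrict (N.subgroupOf T ⊓ J.subgroupOf T : Subgroup T) ∈
      coprimeTorsion p ((N.subgroupOf T ⊓ J.subgroupOf T : Subgroup T) →* Kˣ))
    (f : A →* Subgroup.normalizer (T : Set Γ)) (β : A →* RingAut K)
    (hρ₀ : ∀ a, ∀ n ∈ N.subgroupOf T,
      ρ₀.character (T.normalizerMonoidHom (f a) n) = β a (ρ₀.character n))
    (hpow : ∀ a, ∃ k : ℕ, (f (a ^ p ^ k) : Γ) ∈ T ∧ β (a ^ p ^ k) = 1) :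
    ∃ χ ∈ coprimeExtensions p (N.subgroupOf T) (J.subgroupOf T) ρ₀,
      ∀ a t, χ (T.normalizerMonoidHom (f a) t) = β a (χ t) := by
  refine exists_mem_coprimeExtensions_equivariant hirr hV
    (subgroupOf_sup_subgroupOf_eq_top hNT hNJ) hdet (T.normalizerMonoidHom.comp f) β
    (fun a n hn => hN.conj_mem n hn (f a)) hρ₀
    (fun a _ => exists_mem_subgroupOf_isConj_conj hNT hNJ (f a)) fun a => ?_
  obtain ⟨k, hT, hβ⟩ := hpow a
  exact ⟨k, ⟨⟨_, hT⟩, MulEquiv.ext fun t => rfl⟩, hβ⟩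

end ConjugationEquivariance

section Qab

instance isCyclotomicExtension_Qab : IsCyclotomicExtension Set.univ ℚ Qab := by
  have hQab : Qab = IntermediateField.adjoin ℚ {x : ℂ | ∃ n ∈ Set.univ, n ≠ 0 ∧ x ^ n = 1} := by
    simp only [Qab, Set.mem_univ, true_and, Nat.pos_iff_ne_zero]
  exact hQab ▸ IntermediateField.isCyclotomicExtension_adjoin_of_exists_isPrimitiveRoot Set.univ ℚ ℂ
    fun n _ hn => ⟨_, Complex.isPrimitiveRoot_exp n hn⟩

instance hasEnoughRootsOfUnity_Qab (n : ℕ) [NeZero n] : HasEnoughRootsOfUnity Qab n where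
  prim := IsCyclotomicExtension.exists_isPrimitiveRoot ℚ Qab (Set.mem_univ n) (NeZero.ne n)
  cyc := inferInstance

variable {Γ : Type} [Group Γ] {X Y : Subgroup Γ} {hX : X.Normal} {ψ : X → Qab}

/-- The stabilizer of a character `ψ` of `X ⊴ Γ` in `Γ × Gal(ℚ^ab/ℚ)`, encoded as the group of
pairs `(y, σ)` such that `ψ^y = σ ∘ ψ`. -/
def galStab (hX : X.Normal) (ψ : X → Qab) : Subgroup (Γ × (Qab ≃ₐ[ℚ] Qab)) where
  carrier := {a | conjChar hX a.1 ψ = a.2 ∘ ψ}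
  one_mem' := conjChar_one hX ψ
  mul_mem' {a b} ha hb := by
    change conjChar hX (a.1 * b.1) ψ = a.2 ∘ b.2 ∘ ψ
    rw [conjChar_mul, ha, ← hb]
    rfl
  inv_mem' {a} ha := by
    change conjChar hX a.1⁻¹ ψ = a.2.symm ∘ ψ
    have h : a.2 ∘ conjChar hX a.1⁻¹ ψ = ψ :=
      calc a.2 ∘ conjChar hX a.1⁻¹ ψ = conjChar hX a.1⁻¹ (a.2 ∘ ψ) := rfl
        _ = ψ := by rw [← ha, ← conjChar_mul, mul_inv_cancel, conjChar_one]
    exact (a.2.toEquiv.eq_symm_comp _ _).2 h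

lemma fst_mem_normalizer_charStab {a : Γ × (Qab ≃ₐ[ℚ] Qab)} (ha : a ∈ galStab hX ψ) :
    a.1 ∈ Subgroup.normalizer (charStab hX ψ : Set Γ) := by
  refine Subgroup.mem_normalizer_iff.2 fun y => ?_
  have hy : a * (y, 1) * a⁻¹ = (a.1 * y * a.1⁻¹, 1) := by ext <;> simp
  change (y, 1) ∈ galStab hX ψ ↔ (a.1 * y * a.1⁻¹, 1) ∈ galStab hX ψ
  rw [← hy, (galStab hX ψ).mul_mem_cancel_right (inv_mem ha), (galStab hX ψ).mul_mem_cancel_left ha]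

lemma fst_mem_normalizer_charStab_inf [Y.Normal] {a : Γ × (Qab ≃ₐ[ℚ] Qab)}
    (ha : a ∈ galStab hX ψ) :
    a.1 ∈ Subgroup.normalizer ((charStab hX ψ ⊓ Y : Subgroup Γ) : Set Γ) :=
  Subgroup.inf_normalizer_le_normalizer_inf
    ⟨fst_mem_normalizer_charStab ha,
      (Subgroup.normalizer_eq_top (H := Y)).symm ▸ Subgroup.mem_top _⟩

end Qab

section StabilizerEquivariance

open Representation
open scoped IsMulCommutative

variable {p : ℕ} {Γ : Type} [Group Γ] {X Y : Subgroup Γ} {hX : X.Normal}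
  {ψ : X → Qab}

instance isMulCommutative_gal_Qab : IsMulCommutative (Qab ≃ₐ[ℚ] Qab) :=
  IsCyclotomicExtension.isMulCommutative Set.univ ℚ Qab

variable (p hX ψ) in
/-- The elements of `galStab hX ψ` whose Galois component has order a power of `p`. -/
def primaryGalStab : Subgroup (Γ × (Qab ≃ₐ[ℚ] Qab)) :=
  galStab hX ψ ⊓ (CommGroup.primaryComponent (Qab ≃ₐ[ℚ] Qab) p).comap (MonoidHom.snd _ _)

lemma exists_pow_mem_charStab_inf [hY : Y.Normal] (hq : IsPGroup p (Γ ⧸ Y))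
    {a : Γ × (Qab ≃ₐ[ℚ] Qab)} (ha : a ∈ primaryGalStab p hX ψ) :
    ∃ k : ℕ, a.1 ^ p ^ k ∈ charStab hX ψ ⊓ Y ∧ a.2 ^ p ^ k = 1 := by
  obtain ⟨hstab, m, hm⟩ := ha
  obtain ⟨n, hn⟩ := hq a.1
  have hσ : a.2 ^ p ^ (m + n) = 1 := by
    rw [pow_add, pow_mul, show a.2 ^ p ^ m = 1 from hm, one_pow]
  have hpow : a ^ p ^ (m + n) = (a.1 ^ p ^ (m + n), 1) := Prod.ext rfl hσ
  refine ⟨m + n, Subgroup.mem_inf.2 ⟨?_, ?_⟩, hσ⟩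
  · exact (hpow ▸ pow_mem hstab _ : (a.1 ^ p ^ (m + n), 1) ∈ galStab hX ψ)
  · rw [← QuotientGroup.eq_one_iff, QuotientGroup.mk_pow, pow_add, mul_comm, pow_mul, hn, one_pow]

theorem exists_mem_coprimeExtensions_galStab_equivariant [Fact p.Prime] [Finite Γ] [hY : Y.Normal]
    (hq : IsPGroup p (Γ ⧸ Y)) (hXT : X ≤ charStab hX ψ ⊓ Y) {J : Subgroup Γ}
    (hXJ : (X : Set Γ) * (J : Set Γ) = Set.univ) {V : Type*} [AddCommGroup V] [Module Qab V]
    [FiniteDimensional Qab V] {ρ₀ : Representation Qab ↥(charStab hX ψ ⊓ Y) V}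
    (hρ₀ : ∀ x, ρ₀.character (Subgroup.inclusion hXT x) = ψ x)
    (hirr : IsIrreducible (ρ₀.comp (X.subgroupOf (charStab hX ψ ⊓ Y)).subtype))
    (hV : (Module.finrank Qab V).Coprime p)
    (hdet : (detChar ρ₀).domRestrict (X.subgroupOf _ ⊓ J.subgroupOf _) ∈ coprimeTorsion p _) :
    ∃ χ ∈ coprimeExtensions p (X.subgroupOf _) (J.subgroupOf _) ρ₀,
      ∀ a ∈ primaryGalStab p hX ψ, ∀ t ht ht', χ ⟨a.1 * t * a.1⁻¹, ht'⟩ = a.2 (χ ⟨t, ht⟩) := by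
  have : NeZero (Monoid.exponent (X.subgroupOf (charStab hX ψ ⊓ Y))) :=
    ⟨Monoid.exponent_ne_zero_of_finite⟩
  let A := primaryGalStab p hX ψ
  let f : A →* Subgroup.normalizer ((charStab hX ψ ⊓ Y : Subgroup Γ) : Set Γ) :=
    ((MonoidHom.fst _ _).comp A.subtype).codRestrict _ fun a =>
      fst_mem_normalizer_charStab_inf a.2.1
  let β : A →* RingAut Qab :=
    (MulSemiringAction.toRingAut (Qab ≃ₐ[ℚ] Qab) Qab).comp ((MonoidHom.snd _ _).comp A.subtype)
  have hρ₀β : ∀ a, ∀ n ∈ X.subgroupOf (charStab hX ψ ⊓ Y),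
      ρ₀.character (Subgroup.normalizerMonoidHom _ (f a) n) = β a (ρ₀.character n) :=
    fun a ⟨n, hnT⟩ hn =>
      calc ρ₀.character _ = conjChar hX a.1.1 ψ ⟨n, hn⟩ := hρ₀ ⟨_, hX.conj_mem n hn a.1.1⟩
        _ = a.1.2 (ψ ⟨n, hn⟩) := congrFun a.2.1 ⟨n, hn⟩
        _ = β a (ρ₀.character ⟨n, hnT⟩) := congrArg a.1.2 (hρ₀ ⟨n, hn⟩).symm
  have hpow : ∀ a, ∃ k : ℕ, (f (a ^ p ^ k) : Γ) ∈ charStab hX ψ ⊓ Y ∧ β (a ^ p ^ k) = 1 := by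
    intro a
    obtain ⟨k, hk, hσ⟩ := exists_pow_mem_charStab_inf hq a.2
    refine ⟨k, hk, ?_⟩
    calc β (a ^ p ^ k) = MulSemiringAction.toRingAut (Qab ≃ₐ[ℚ] Qab) Qab (a.1.2 ^ p ^ k) := rfl
      _ = 1 := by rw [hσ, map_one]
  obtain ⟨χ, hχ, hequiv⟩ :=
    exists_mem_coprimeExtensions_conj_equivariant hXT hXJ hirr hV hdet f β hρ₀β hpow
  exact ⟨χ, hχ, fun a ha t ht _ => hequiv ⟨a, ha⟩ ⟨t, ht⟩⟩

end StabilizerEquivariance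

section Determinants

lemma mem_coprimeTorsion_of_coprime_card {p : ℕ} {S A : Type*} [Group S] [CommGroup A]
    (hS : (Nat.card S).Coprime p) (l : S →* A) : l ∈ coprimeTorsion p (S →* A) :=
  Nat.Coprime.of_dvd_left (orderOf_dvd_of_pow_eq_one (MonoidHom.ext fun s => by
    rw [MonoidHom.pow_apply, ← map_pow, pow_card_eq_one', map_one, MonoidHom.one_apply])) hS

variable {K G V W : Type*} [Field K] [CharZero K] [Group G] [Finite G] [AddCommGroup V]
  [Module K V] [FiniteDimensional K V] [AddCommGroup W] [Module K W] [FiniteDimensional K W]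

lemma domRestrict_detChar_mem_coprimeTorsion {p : ℕ} {N T : Subgroup G} (hNT : N ≤ T)
    {τ : Representation K N V} [τ.IsIrreducible] {ρ : Representation K T W}
    (h : ∀ n, τ.character n = ρ.character (Subgroup.inclusion hNT n))
    (hτ : (orderOf fun n => LinearMap.det (τ n)).Coprime p) (S : Subgroup T) :
    (detChar ρ).domRestrict (N.subgroupOf T ⊓ S) ∈ coprimeTorsion p _ := by
  obtain ⟨e⟩ := nonempty_equiv_of_character_eq (σ := ρ.comp (Subgroup.inclusion hNT)) (funext h)
  refine Nat.Coprime.of_dvd_left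
    (orderOf_dvd_of_pow_eq_one (MonoidHom.ext fun s => Units.ext ?_)) hτ
  let n : N := ⟨s, s.2.1⟩
  have hdet : LinearMap.det (ρ s) = LinearMap.det (τ n) :=
    congrArg Units.val (DFunLike.congr_fun (detChar_eq_of_equiv e) n).symm
  calc LinearMap.det (ρ s) ^ orderOf (fun n => LinearMap.det (τ n))
      = LinearMap.det (τ n) ^ orderOf (fun n => LinearMap.det (τ n)) := by rw [hdet]
    _ = 1 := congrFun (pow_orderOf_eq_one fun n => LinearMap.det (τ n)) n

end Determinants

section Extension

open Representation CategoryTheory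
open scoped IsMulCommutative

lemma isIrrChar_of_isIrreducible {G V : Type} [Group G] [AddCommGroup V] [Module Qab V]
    [FiniteDimensional Qab V] (ρ : Representation Qab G V) [ρ.IsIrreducible] :
    IsIrrChar G ρ.character :=
  have : Representation.IsIrreducible (FDRep.of ρ).ρ := ‹ρ.IsIrreducible›
  ⟨FDRep.of ρ, simple_of_isIrreducible _, rfl⟩

lemma le_charStab_character {Γ : Type} [Group Γ] {X : Subgroup Γ} (hX : X.Normal)
    (V : FDRep Qab X) : X ≤ charStab hX V.character :=
  fun x hx => funext fun z => V.char_conj z ⟨x, hx⟩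

theorem exists_isIrrChar_extension_galStab_equivariant {p : ℕ} [Fact p.Prime] {Γ : Type} [Group Γ]
    [Finite Γ] {X Y : Subgroup Γ} {hX : X.Normal} [hY : Y.Normal] {ψ : X → Qab}
    (hq : IsPGroup p (Γ ⧸ Y)) (hXT : X ≤ charStab hX ψ ⊓ Y) (hψ : IsIrrCharL' p X ψ)
    {V : FDRep Qab ↥(charStab hX ψ ⊓ Y)} (hV : ∀ x, V.character (Subgroup.inclusion hXT x) = ψ x)
    {J : Subgroup Γ} (hXJ : (X : Set Γ) * (J : Set Γ) = Set.univ)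
    (hdet : (detChar V.ρ).domRestrict (X.subgroupOf _ ⊓ J.subgroupOf _) ∈ coprimeTorsion p _) :
    ∃ χ : ↥(charStab hX ψ ⊓ Y) → Qab, IsIrrChar _ χ ∧
      (∀ x, χ (Subgroup.inclusion hXT x) = ψ x) ∧
      ∀ a ∈ primaryGalStab p hX ψ, ∀ t ht ht', χ ⟨a.1 * t * a.1⁻¹, ht'⟩ = a.2 (χ ⟨t, ht⟩) := by
  obtain ⟨U, hU, hUψ, hUp⟩ := hψ
  have := isIrreducible_of_simple U
  have hirr : IsIrreducible (V.ρ.comp (X.subgroupOf (charStab hX ψ ⊓ Y)).subtype) :=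
    isIrreducible_of_character_comp_eq (τ := U.ρ)
      (Subgroup.subgroupOfEquivOfLe hXT).symm.toMonoidHom fun x =>
        (congrFun hUψ x).trans (hV x).symm
  have hdim : (Module.finrank Qab V).Coprime p := by
    have h : (Module.finrank Qab V : Qab) = Module.finrank Qab U := by
      rw [← FDRep.char_one, ← FDRep.char_one, hUψ, ← hV, map_one]
    rwa [Nat.cast_injective h]
  obtain ⟨χ, ⟨ρ, rfl, hρV, -⟩, hequiv⟩ :=
    exists_mem_coprimeExtensions_galStab_equivariant hq hXT hXJ hV hirr hdim hdet
  have hρψ : ∀ x, ρ.character (Subgroup.inclusion hXT x) = ψ x := fun x =>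
    (hρV _ x.2).trans (hV x)
  have : ρ.IsIrreducible := isIrreducible_of_character_comp_eq (τ := U.ρ)
    (Subgroup.inclusion hXT) fun x => (congrFun hUψ x).trans (hρψ x).symm
  exact ⟨ρ.character, isIrrChar_of_isIrreducible ρ, hρψ, hequiv⟩

lemma mk_inv_mem_primaryGalStab {p : ℕ} {Γ : Type} [Group Γ] {X : Subgroup Γ} {hX : X.Normal}
    {ψ : X → Qab} {y : Γ} {σ : Qab ≃ₐ[ℚ] Qab} (hψ : (fun x => σ (conjChar hX y ψ x)) = ψ)
    (hσ : ∃ k : ℕ, orderOf σ = p ^ k) : (y, σ⁻¹) ∈ primaryGalStab p hX ψ := by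
  obtain ⟨k, hk⟩ := hσ
  have hσ' : σ ∈ CommGroup.primaryComponent (Qab ≃ₐ[ℚ] Qab) p := ⟨k, hk ▸ pow_orderOf_eq_one σ⟩
  exact ⟨(σ.toEquiv.eq_symm_comp _ _).2 hψ, inv_mem hσ'⟩

lemma exists_mul_eq_univ_detChar_mem_coprimeTorsion {p : ℕ} (hp : p.Prime) {Γ : Type} [Group Γ]
    [Finite Γ] {X T : Subgroup Γ} (hXT : X ≤ T) {ψ : X → Qab} {V : FDRep Qab T}
    (hV : ∀ x, V.character (Subgroup.inclusion hXT x) = ψ x)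
    (hcase :
      (∃ U : FDRep Qab X, Simple U ∧ U.character = ψ ∧
        ¬ p ∣ orderOf (fun x : X => LinearMap.det (U.ρ x))) ∨
      (∃ K : Subgroup Γ, (X : Set Γ) * (K : Set Γ) = Set.univ ∧
        (Nat.card ↥(K ⊓ X)).Coprime p)) :
    ∃ J : Subgroup Γ, (X : Set Γ) * (J : Set Γ) = Set.univ ∧
      (detChar V.ρ).domRestrict (X.subgroupOf T ⊓ J.subgroupOf T) ∈ coprimeTorsion p _ := by
  rcases hcase with ⟨U, hU, rfl, hord⟩ | ⟨K, hXK, hcard⟩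
  · have := isIrreducible_of_simple U
    exact ⟨⊤, by simp, domRestrict_detChar_mem_coprimeTorsion (τ := U.ρ) hXT
      (fun x => (hV x).symm) (hp.coprime_iff_not_dvd.2 hord).symm _⟩
  · have hdvd : Nat.card ↥(X.subgroupOf T ⊓ K.subgroupOf T) ∣ Nat.card ↥(X ⊓ K) :=
      Subgroup.card_comap_dvd_of_injective (X ⊓ K) T.subtype T.subtype_injective
    exact ⟨K, hXK, mem_coprimeTorsion_of_coprime_card
      (Nat.Coprime.of_dvd_left hdvd (inf_comm K X ▸ hcard)) _⟩

end Extension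

theorem extension_with_same_stabilizer_general
    (ℓ : ℕ) (hℓ : ℓ.Prime) (Yhat : Type) [Group Yhat] [Finite Yhat]
    (X Y : Subgroup Yhat) (hXY : X ≤ Y) [hXn : X.Normal] [hYn : Y.Normal]
    (hq : IsPGroup ℓ (Yhat ⧸ Y))
    (ψ : ↥X → ↥Qab) (hψ : IsIrrCharL' ℓ (↥X) ψ)
    (hext : ∃ χ₀ : ↥(charStab hXn ψ ⊓ Y) → ↥Qab, IsIrrChar (↥(charStab hXn ψ ⊓ Y)) χ₀ ∧
      ∀ (x : Yhat) (hx : x ∈ X) (hx' : x ∈ charStab hXn ψ ⊓ Y),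
        χ₀ ⟨x, hx'⟩ = ψ ⟨x, hx⟩)
    (hcase :
      (∃ V : FDRep (↥Qab) (↥X), CategoryTheory.Simple V ∧ FDRep.character V = ψ ∧
        ¬ ℓ ∣ orderOf (fun x : ↥X => LinearMap.det (FDRep.ρ V x))) ∨
      (∃ Khat : Subgroup Yhat, (X : Set Yhat) * (Khat : Set Yhat) = Set.univ ∧
        Nat.Coprime (Nat.card ↥(Khat ⊓ X)) ℓ)) :
    ∃ χ : ↥(charStab hXn ψ ⊓ Y) → ↥Qab, IsIrrChar (↥(charStab hXn ψ ⊓ Y)) χ ∧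
      (∀ (x : Yhat) (hx : x ∈ X) (hx' : x ∈ charStab hXn ψ ⊓ Y),
        χ ⟨x, hx'⟩ = ψ ⟨x, hx⟩) ∧
      ∀ (y : Yhat) (σ : ↥Qab ≃ₐ[ℚ] ↥Qab), (∃ k : ℕ, orderOf σ = ℓ ^ k) →
        (((fun x => σ (conjChar hXn y ψ x)) = ψ) ↔
          (∀ (a : Yhat) (ha : a ∈ charStab hXn ψ ⊓ Y)
              (ha' : y * a * y⁻¹ ∈ charStab hXn ψ ⊓ Y),
            σ (χ ⟨y * a * y⁻¹, ha'⟩) = χ ⟨a, ha⟩)) := by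
  have := Fact.mk hℓ
  have hXT : X ≤ charStab hXn ψ ⊓ Y := by
    obtain ⟨V, -, rfl, -⟩ := hψ
    exact le_inf (le_charStab_character hXn V) hXY
  obtain ⟨_, ⟨V, -, rfl⟩, hV⟩ := hext
  replace hV : ∀ x, V.character (Subgroup.inclusion hXT x) = ψ x := fun x => hV x x.2 (hXT x.2)
  obtain ⟨J, hXJ, hdet⟩ := exists_mul_eq_univ_detChar_mem_coprimeTorsion hℓ hXT hV hcase
  obtain ⟨χ, hirr, hχψ, hequiv⟩ :=
    exists_isIrrChar_extension_galStab_equivariant hq hXT hψ hV hXJ hdet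
  refine ⟨χ, hirr, fun x hx _ => hχψ ⟨x, hx⟩, fun y σ hσ =>
    ⟨fun h a ha ha' => ?_, fun h => funext fun x => ?_⟩⟩
  · exact (congrArg σ (hequiv _ (mk_inv_mem_primaryGalStab h hσ) a ha ha')).trans
      (σ.apply_symm_apply _)
  · have hx := h x (hXT x.2) (hXT (hXn.conj_mem _ x.2 y))
    exact (congrArg σ (hχψ ⟨_, hXn.conj_mem _ x.2 y⟩)).symm.trans (hx.trans (hχψ x))

/-- **Lemma 3.2.** Let `X ⊴ Y ⊴ Yhat` with `X ⊴ Yhat`, where `Y/X` has a normal Sylow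
`ℓ`-subgroup and `Yhat/Y` is an `ℓ`-group. Let `ψ ∈ Irr_{ℓ'}(X)` extend to its
stabilizer `Y_ψ`, and suppose that (i) `ℓ ∤ o(ψ)` (the order of the determinantal
character of `ψ`), or (ii) there is `Khat ≤ Yhat` with `Yhat = X Khat` and `Khat ∩ X` an
`ℓ'`-group. Then `ψ` has an extension `χ ∈ Irr(Y_ψ)` with
`(Yhat × ℋ₀)_χ = (Yhat × ℋ₀)_ψ`: for all `y ∈ Yhat` and `σ ∈ ℋ₀`, `(ψ^y)^σ = ψ` holds if
and only if `(χ^y)^σ = χ` holds. -/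
theorem extension_with_same_stabilizer
    (ℓ : ℕ) (hℓ : ℓ.Prime) (Yhat : Type) [Group Yhat] [Fintype Yhat]
    (X Y : Subgroup Yhat) (hXY : X ≤ Y) [hXn : X.Normal] [hYn : Y.Normal]
    (hsyl : ∃ P : Sylow ℓ (↥Y ⧸ X.subgroupOf Y),
      (P : Subgroup (↥Y ⧸ X.subgroupOf Y)).Normal)
    (hq : IsPGroup ℓ (Yhat ⧸ Y))
    (ψ : ↥X → ↥Qab) (hψ : IsIrrCharL' ℓ (↥X) ψ)
    (hext : ∃ χ₀ : ↥(charStab hXn ψ ⊓ Y) → ↥Qab, IsIrrChar (↥(charStab hXn ψ ⊓ Y)) χ₀ ∧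
      ∀ (x : Yhat) (hx : x ∈ X) (hx' : x ∈ charStab hXn ψ ⊓ Y),
        χ₀ ⟨x, hx'⟩ = ψ ⟨x, hx⟩)
    (hcase :
      (∃ V : FDRep (↥Qab) (↥X), CategoryTheory.Simple V ∧ FDRep.character V = ψ ∧
        ¬ ℓ ∣ orderOf (fun x : ↥X => LinearMap.det (FDRep.ρ V x))) ∨
      (∃ Khat : Subgroup Yhat, (X : Set Yhat) * (Khat : Set Yhat) = Set.univ ∧
        Nat.Coprime (Nat.card ↥(Khat ⊓ X)) ℓ)) :
    ∃ χ : ↥(charStab hXn ψ ⊓ Y) → ↥Qab, IsIrrChar (↥(charStab hXn ψ ⊓ Y)) χ ∧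
      (∀ (x : Yhat) (hx : x ∈ X) (hx' : x ∈ charStab hXn ψ ⊓ Y),
        χ ⟨x, hx'⟩ = ψ ⟨x, hx⟩) ∧
      ∀ (y : Yhat) (σ : ↥Qab ≃ₐ[ℚ] ↥Qab), MemH0 ℓ σ →
        (((fun x => σ (conjChar hXn y ψ x)) = ψ) ↔
          (∀ (a : Yhat) (ha : a ∈ charStab hXn ψ ⊓ Y)
              (ha' : y * a * y⁻¹ ∈ charStab hXn ψ ⊓ Y),
            σ (χ ⟨y * a * y⁻¹, ha'⟩) = χ ⟨a, ha⟩)) := by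
  obtain ⟨χ, hirr, hχψ, hstab⟩ :=
    extension_with_same_stabilizer_general ℓ hℓ Yhat X Y hXY hq ψ hψ hext hcase
  exact ⟨χ, hirr, hχψ, fun y σ hσ => hstab y σ hσ.1⟩
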